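/- arXiv:1309.0149 — 9 statements merged into one kernel-verified Lean document; each statement's English description precedes it below -/
import Mathlib

section
/- Let H be a real Hilbert space and let f : H → ℝ be of class C^{1,1}. Suppose that for some a ∈ ℝ the open sublevel set {x ∈ H | f(x) < a} is the union of two nonempty disjoint open sets A and B. Define c := inf over all continuous paths γ : [0,1] → H with γ(0) ∈ A and γ(1) ∈ B of max_{t∈[0,1]} f(γ(t)). Then a ≤ c < +∞ and f admits a Palais–Smale sequence at level c, i.e. there is a sequence (x_n) in H with f(x_n) → c and ‖df(x_n)‖ → 0. -/
/-!
The proof minimises `Φ γ = max f ∘ γ` over paths with fixed endpoints, by Ekeland's variational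
principle (`ekeland`) instead of a deformation along the gradient flow.

Connectedness of `[0,1]` forces every path from `A` to `B` to leave `{f < a}`, hence `a ≤ c`.
Given `ε > 0`, pick a path from `p ∈ A` to `q ∈ B` whose maximum is below `c + ε`. The continuous
paths from `p` to `q` form a complete metric space on which `Φ` is lower semicontinuous and
bounded below by `c`, so Ekeland's principle gives a path `γ` with `c ≤ Φ γ < c + ε` and
`Φ γ ≤ Φ η + ε * dist γ η` for every other path `η`. Since `f p, f q < a ≤ c ≤ Φ γ`, the path can be
pushed down along the normalised gradient near its highest points without moving the endpoints
(`exists_almost_critical_of_almost_minimal`); if `‖df‖ > 2 ε` at all highest points, this decreases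
`Φ` too fast. So some highest point `x` of `γ` satisfies `c ≤ f x < c + ε` and `‖df x‖ ≤ 2 ε`.
-/

open Filter Set
open scoped Topology unitInterval

/-- A weak form of **Ekeland's variational principle**. -/
lemma ekeland {X : Type*} [MetricSpace X] [CompleteSpace X] (φ : X → ℝ)
    (hφ : LowerSemicontinuous φ) (b : ℝ) (hb : ∀ x, b ≤ φ x) (ε : ℝ) (hε : 0 < ε) (x₀ : X) :
    ∃ y, φ y ≤ φ x₀ ∧ ∀ z, φ y ≤ φ z + ε * dist y z := by
  -- `x'` is an almost minimiser, up to `δ`, of `φ` on `{z | φ z + ε * dist x z ≤ φ x}`.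
  have step : ∀ (x : X) (δ : ℝ), 0 < δ → ∃ x', φ x' + ε * dist x x' ≤ φ x ∧
      ∀ z, φ z + ε * dist x z ≤ φ x → φ x' ≤ φ z + δ := by
    intro x δ hδ
    let T : Set ℝ := φ '' {z | φ z + ε * dist x z ≤ φ x}
    have hTne : T.Nonempty := ⟨φ x, x, by simp, rfl⟩
    have hTb : BddBelow T := ⟨b, by rintro _ ⟨z, -, rfl⟩; exact hb z⟩
    obtain ⟨_, ⟨x', hx', rfl⟩, hlt⟩ := exists_lt_of_csInf_lt hTne (lt_add_of_pos_right (sInf T) hδ)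
    refine ⟨x', hx', fun z hz => ?_⟩
    have := csInf_le hTb ⟨z, hz, rfl⟩
    linarith
  choose! F hF1 hF2 using step
  let u : ℕ → X := fun n => Nat.rec x₀ (fun k x => F x ((1 / 2 : ℝ) ^ k)) n
  have hu1 : ∀ n, φ (u (n + 1)) + ε * dist (u n) (u (n + 1)) ≤ φ (u n) := fun n =>
    hF1 (u n) _ (by positivity)
  have hu2 : ∀ n z, φ z + ε * dist (u n) z ≤ φ (u n) → φ (u (n + 1)) ≤ φ z + (1 / 2 : ℝ) ^ n :=
    fun n => hF2 (u n) _ (by positivity)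
  have hmono : ∀ n m, n ≤ m → φ (u m) + ε * dist (u n) (u m) ≤ φ (u n) := by
    intro n m hnm
    induction m, hnm using Nat.le_induction with
    | base => simp
    | succ m _ ih =>
      have h1 := hu1 m
      have h2 := mul_le_mul_of_nonneg_left (dist_triangle (u n) (u m) (u (m + 1))) hε.le
      linarith
  have hanti : Antitone (fun n => φ (u n)) := fun n m hnm => by
    have := hmono n m hnm
    have : 0 ≤ ε * dist (u n) (u m) := by positivity
    dsimp only
    linarith
  have hlim := tendsto_atTop_ciInf hanti ⟨b, by rintro _ ⟨n, rfl⟩; exact hb _⟩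
  have hcau : CauchySeq u := by
    rw [Metric.cauchySeq_iff']
    intro r hr
    obtain ⟨N, hN⟩ := Metric.cauchySeq_iff'.1 hlim.cauchySeq (ε * r) (by positivity)
    refine ⟨N, fun n hn => ?_⟩
    have h1 := hN n hn
    have h2 := hmono N n hn
    rw [Real.dist_eq, abs_lt] at h1
    rw [dist_comm]
    have : ε * dist (u N) (u n) < ε * r := by linarith
    exact lt_of_mul_lt_mul_left this hε.le
  obtain ⟨y, hy⟩ := cauchySeq_tendsto_of_complete hcau
  have hyS : ∀ n, φ y + ε * dist (u n) y ≤ φ (u n) := by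
    intro n
    have hlsc : LowerSemicontinuous (fun z => φ z + ε * dist (u n) z) :=
      hφ.add (by fun_prop : Continuous fun z => ε * dist (u n) z).lowerSemicontinuous
    exact (hlsc.isClosed_preimage (φ (u n))).mem_of_tendsto hy
      (eventually_atTop.2 ⟨n, fun m hm => hmono n m hm⟩)
  refine ⟨y, ?_, fun z => ?_⟩
  · have := hyS 0
    have h0 : 0 ≤ ε * dist (u 0) y := by positivity
    change φ y + ε * dist x₀ y ≤ φ x₀ at this
    change 0 ≤ ε * dist x₀ y at h0
    linarith
  · by_contra! hlt
    have hz : ∀ n, φ y ≤ φ z + (1 / 2 : ℝ) ^ n := by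
      intro n
      have h1 := mul_le_mul_of_nonneg_left (dist_triangle (u n) y z) hε.le
      have h2 := hyS n
      have h3 := hu2 n z (by linarith)
      have h4 := hyS (n + 1)
      have : 0 ≤ ε * dist (u (n + 1)) y := by positivity
      linarith
    have hle : φ y ≤ φ z + 0 := ge_of_tendsto'
      ((tendsto_pow_atTop_nhds_zero_of_lt_one (by norm_num) (by norm_num)).const_add _) hz
    have : 0 ≤ ε * dist y z := by positivity
    linarith

lemma bddAbove_range_comp_path {H : Type*} [NormedAddCommGroup H] {f : H → ℝ} (hf : Continuous f)
    (γ : C(I, H)) : BddAbove (Set.range fun t => f (γ t)) :=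
  (isCompact_range (by fun_prop)).bddAbove

/-- A path that is almost minimal (in Ekeland's sense) for `γ ↦ max f ∘ γ` among the paths with the
same endpoints carries an almost critical point of `f` at its maximum, provided the maximum exceeds
the values of `f` at the endpoints. -/
lemma exists_almost_critical_of_almost_minimal
    {H : Type*} [NormedAddCommGroup H] [InnerProductSpace ℝ H] [CompleteSpace H]
    {f : H → ℝ} (hf : Differentiable ℝ f) (hf' : Continuous (fderiv ℝ f))
    (γ : C(I, H)) {ε : ℝ} (hε : 0 < ε)
    (h0 : f (γ 0) < ⨆ t, f (γ t)) (h1 : f (γ 1) < ⨆ t, f (γ t))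
    (hmin : ∀ η : C(I, H), η 0 = γ 0 → η 1 = γ 1 →
      ⨆ t, f (γ t) ≤ (⨆ t, f (η t)) + ε * dist γ η) :
    ∃ t, f (γ t) = ⨆ t, f (γ t) ∧ ‖fderiv ℝ f (γ t)‖ ≤ 2 * ε := by
  have hfc : Continuous f := hf.continuous
  set M := ⨆ t, f (γ t) with hM
  have hleM : ∀ t, f (γ t) ≤ M := fun t => le_ciSup (bddAbove_range_comp_path hfc γ) t
  set l := max (f (γ 0)) (f (γ 1)) with hl
  have hlM : 0 < M - l := sub_pos.2 (max_lt h0 h1)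
  let g : H → H := fun x => (InnerProductSpace.toDual ℝ H).symm (fderiv ℝ f x)
  have hgc : Continuous g := (InnerProductSpace.toDual ℝ H).symm.continuous.comp hf'
  have hgn : ∀ x, ‖g x‖ = ‖fderiv ℝ f x‖ := fun x => LinearIsometryEquiv.norm_map _ _
  have hgd : ∀ x v, fderiv ℝ f x v = inner ℝ (g x) v := fun x v =>
    (InnerProductSpace.toDual_symm_apply).symm
  have hmaxpos : ∀ x, 0 < max ‖g x‖ (2 * ε) := fun x => lt_max_of_lt_right (by positivity)
  -- The cutoff `θ` vanishes at the endpoints and equals `1` at the highest points of the path.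
  let θ : I → ℝ := fun t => max 0 (f (γ t) - l) / (M - l)
  have hθ0 : ∀ t, 0 ≤ θ t := fun t => div_nonneg (le_max_left _ _) hlM.le
  have hθ1 : ∀ t, θ t ≤ 1 := fun t => by
    rw [div_le_one hlM]
    exact max_le hlM.le (by linarith [hleM t])
  have hθc : Continuous θ := by fun_prop
  let w : C(I, H) := ⟨fun t => (θ t / max ‖g (γ t)‖ (2 * ε)) • g (γ t), by
    refine Continuous.smul (hθc.div (by fun_prop) fun t => (hmaxpos _).ne') (by fun_prop)⟩
  have hw1 : ∀ t, ‖w t‖ ≤ 1 := by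
    intro t
    change ‖(θ t / max ‖g (γ t)‖ (2 * ε)) • g (γ t)‖ ≤ 1
    rw [norm_smul, Real.norm_of_nonneg (div_nonneg (hθ0 t) (hmaxpos _).le), div_mul_eq_mul_div,
      div_le_one (hmaxpos _)]
    calc θ t * ‖g (γ t)‖ ≤ 1 * ‖g (γ t)‖ := by gcongr; exact hθ1 t
      _ ≤ _ := by rw [one_mul]; exact le_max_left _ _
  have hw_end : ∀ t, f (γ t) ≤ l → w t = 0 := by
    intro t ht
    have : θ t = 0 := by simp [θ, max_eq_left (sub_nonpos.2 ht)]
    change (θ t / max ‖g (γ t)‖ (2 * ε)) • g (γ t) = 0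
    simp [this]
  let s : ℕ → ℝ := fun n => 1 / ((n : ℝ) + 1)
  have hs0 : ∀ n, 0 < s n := fun n => Nat.one_div_pos_of_nat
  have hs : Tendsto s atTop (𝓝 0) := tendsto_one_div_add_atTop_nhds_zero_nat
  have hkey : ∀ n, ∃ t, M ≤ f (γ t - s n • w t) + ε * s n := by
    intro n
    let η : C(I, H) := γ - s n • w
    have hη0 : η 0 = γ 0 := by simp [η, hw_end 0 (le_max_left _ _)]
    have hη1 : η 1 = γ 1 := by simp [η, hw_end 1 (le_max_right _ _)]
    have hd : dist γ η ≤ s n := by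
      rw [ContinuousMap.dist_le (hs0 n).le]
      intro t
      have : dist (γ t) (η t) = s n * ‖w t‖ := by
        simp [η, norm_smul, abs_of_pos (hs0 n)]
      rw [this]
      exact mul_le_of_le_one_right (hs0 n).le (hw1 t)
    obtain ⟨t, -, ht⟩ := isCompact_univ.exists_isMaxOn (Set.univ_nonempty (α := I))
      (f := fun t => f (η t)) (by fun_prop)
    refine ⟨t, ?_⟩
    have h1 : (⨆ t, f (η t)) ≤ f (η t) := ciSup_le fun t' => ht (Set.mem_univ t')
    have h2 := hmin η hη0 hη1
    have h3 := mul_le_mul_of_nonneg_left hd hε.le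
    change M ≤ f (η t) + ε * s n
    linarith
  choose τ hτ using hkey
  obtain ⟨t, -, ψ, hψ, hlim⟩ := isCompact_univ.tendsto_subseq (x := τ) fun n => Set.mem_univ _
  have hsψ : Tendsto (fun n => s (ψ n)) atTop (𝓝 0) := hs.comp hψ.tendsto_atTop
  have hγlim : Tendsto (fun n => γ (τ (ψ n))) atTop (𝓝 (γ t)) :=
    (γ.continuous.tendsto t).comp hlim
  have hwlim : Tendsto (fun n => w (τ (ψ n))) atTop (𝓝 (w t)) :=
    (w.continuous.tendsto t).comp hlim
  have hηlim : Tendsto (fun n => γ (τ (ψ n)) - s (ψ n) • w (τ (ψ n))) atTop (𝓝 (γ t)) := by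
    simpa using hγlim.sub (hsψ.smul hwlim)
  have hft : f (γ t) = M := by
    refine le_antisymm (hleM t) ?_
    have : Tendsto (fun n => f (γ (τ (ψ n)) - s (ψ n) • w (τ (ψ n))) + ε * s (ψ n)) atTop
        (𝓝 (f (γ t) + ε * 0)) :=
      ((hfc.tendsto _).comp hηlim).add (hsψ.const_mul ε)
    simpa using ge_of_tendsto' this fun n => hτ (ψ n)
  refine ⟨t, hft, ?_⟩
  by_contra! hbig
  -- Strict differentiability controls the decrease of `f` uniformly near the limit point `γ t`.
  have hstrict : HasStrictFDerivAt f (fderiv ℝ f (γ t)) (γ t) :=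
    hasStrictFDerivAt_of_hasFDerivAt_of_continuousAt
      (Eventually.of_forall fun x => (hf x).hasFDerivAt) hf'.continuousAt
  have hlo := (hstrict.isLittleO.comp_tendsto (hηlim.prodMk_nhds hγlim)).def hε
  have hev : ∀ᶠ n in atTop, fderiv ℝ f (γ t) (w (τ (ψ n))) ≤ 2 * ε := by
    filter_upwards [hlo] with n hn
    have hsn := hs0 (ψ n)
    simp only [Function.comp_apply, sub_sub_cancel_left, map_neg, map_smul, smul_eq_mul,
      norm_neg, norm_smul, Real.norm_of_nonneg hsn.le] at hn
    have h1 := (abs_le.1 hn).2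
    have h2 := hτ (ψ n)
    have h3 := hleM (τ (ψ n))
    have h4 : ε * (s (ψ n) * ‖w (τ (ψ n))‖) ≤ ε * s (ψ n) := by
      gcongr
      exact mul_le_of_le_one_right hsn.le (hw1 _)
    have : s (ψ n) * fderiv ℝ f (γ t) (w (τ (ψ n))) ≤ s (ψ n) * (2 * ε) := by linarith
    exact le_of_mul_le_mul_left this hsn
  have hle : fderiv ℝ f (γ t) (w t) ≤ 2 * ε :=
    le_of_tendsto (((fderiv ℝ f (γ t)).continuous.tendsto _).comp hwlim) hev
  have hθt : θ t = 1 := by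
    simp only [θ, hft, max_eq_right hlM.le]
    exact div_self hlM.ne'
  have hval : fderiv ℝ f (γ t) (w t) = ‖fderiv ℝ f (γ t)‖ := by
    have hpos : 0 < ‖g (γ t)‖ := by rw [hgn]; linarith
    change fderiv ℝ f (γ t) ((θ t / max ‖g (γ t)‖ (2 * ε)) • g (γ t)) = _
    rw [hgd, inner_smul_right, real_inner_self_eq_norm_sq, hθt,
      max_eq_left (by rw [hgn]; exact hbig.le), ← hgn]
    field_simp
  linarith

/-- **Mountain pass theorem, existence of a Palais–Smale sequence.**
Let `H` be a real Hilbert space and `f : H → ℝ` of class `C^{1,1}` (differentiable with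
locally Lipschitz differential). If the open sublevel `{f < a}` is the union of two nonempty
disjoint open sets `A` and `B`, and `c` is the minimax value over continuous paths from `A`
to `B` of the maximum of `f` along the path, then `a ≤ c` and `f` admits a Palais–Smale
sequence at level `c`. -/
theorem mountain_pass_palais_smale_sequence
    {H : Type*} [NormedAddCommGroup H] [InnerProductSpace ℝ H] [CompleteSpace H]
    (f : H → ℝ) (hf : Differentiable ℝ f) (hf' : LocallyLipschitz (fderiv ℝ f))
    (a : ℝ) (A B : Set H) (hA : IsOpen A) (hB : IsOpen B)
    (hAne : A.Nonempty) (hBne : B.Nonempty) (hdisj : Disjoint A B)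
    (hsub : {x : H | f x < a} = A ∪ B)
    (c : ℝ)
    (hc : c = sInf {r : ℝ | ∃ γ : ℝ → H, ContinuousOn γ (Icc 0 1) ∧ γ 0 ∈ A ∧ γ 1 ∈ B ∧
      IsGreatest ((fun t => f (γ t)) '' Icc 0 1) r}) :
    a ≤ c ∧ ∃ x : ℕ → H,
      Tendsto (fun n => f (x n)) atTop (nhds c) ∧
      Tendsto (fun n => ‖fderiv ℝ f (x n)‖) atTop (nhds 0) := by
  have hfc : Continuous f := hf.continuous
  set S := {r : ℝ | ∃ γ : ℝ → H, ContinuousOn γ (Icc 0 1) ∧ γ 0 ∈ A ∧ γ 1 ∈ B ∧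
      IsGreatest ((fun t => f (γ t)) '' Icc 0 1) r} with hS
  have hmem : ∀ γ : C(I, H), γ 0 ∈ A → γ 1 ∈ B → (⨆ t, f (γ t)) ∈ S := by
    intro γ h0 h1
    refine ⟨Set.IccExtend zero_le_one γ, γ.continuous.Icc_extend'.continuousOn, ?_, ?_, ?_⟩
    · simpa using h0
    · simpa using h1
    · obtain ⟨t, -, ht⟩ := isCompact_univ.exists_isMaxOn (Set.univ_nonempty (α := I))
        (f := fun t => f (γ t)) (by fun_prop)
      have hle : (⨆ t, f (γ t)) ≤ f (γ t) := ciSup_le fun t' => ht (Set.mem_univ t')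
      have hbd := bddAbove_range_comp_path hfc γ
      refine ⟨⟨t, t.2, ?_⟩, ?_⟩
      · dsimp only
        rw [Set.IccExtend_val]
        exact le_antisymm (le_ciSup hbd t) hle
      · rintro _ ⟨s, hs, rfl⟩
        dsimp only
        rw [Set.IccExtend_of_mem _ _ hs]
        exact le_ciSup hbd ⟨s, hs⟩
  have hne : S.Nonempty := by
    obtain ⟨p, hp⟩ := hAne
    obtain ⟨q, hq⟩ := hBne
    exact ⟨_, hmem ⟨fun t => AffineMap.lineMap p q (t : ℝ), by fun_prop⟩
      (by simpa using hp) (by simpa using hq)⟩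
  have haS : ∀ r ∈ S, a ≤ r := by
    rintro r ⟨γ, hγ, h0, h1, -, hr⟩
    by_contra! hlt
    have hsubset : γ '' Icc 0 1 ⊆ A ∪ B := by
      rintro _ ⟨t, ht, rfl⟩
      rw [← hsub]
      exact lt_of_le_of_lt (hr ⟨t, ht, rfl⟩) hlt
    have hpre : IsPreconnected (γ '' Icc 0 1) := isPreconnected_Icc.image γ hγ
    obtain ⟨x, -, hxA, hxB⟩ := hpre A B hA hB hsubset
      ⟨γ 0, ⟨0, by simp, rfl⟩, h0⟩ ⟨γ 1, ⟨1, by simp, rfl⟩, h1⟩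
    exact Set.disjoint_left.1 hdisj hxA hxB
  have hac : a ≤ c := hc ▸ le_csInf hne haS
  have hcS : ∀ r ∈ S, c ≤ r := fun r hr => hc ▸ csInf_le ⟨a, haS⟩ hr
  refine ⟨hac, ?_⟩
  have hAlt : ∀ p ∈ A, f p < a := fun p hp => (hsub ▸ Or.inl hp : p ∈ {x : H | f x < a})
  have hBlt : ∀ q ∈ B, f q < a := fun q hq => (hsub ▸ Or.inr hq : q ∈ {x : H | f x < a})
  have main : ∀ ε : ℝ, 0 < ε → ∃ x, c ≤ f x ∧ f x ≤ c + ε ∧ ‖fderiv ℝ f x‖ ≤ 2 * ε := by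
    intro ε hε
    obtain ⟨r, ⟨γ₀, hγ₀, h0, h1, -, hr⟩, hrc⟩ := exists_lt_of_csInf_lt hne
      (show sInf S < c + ε by rw [← hc]; linarith)
    let Γ₀ : C(I, H) := ⟨Set.domRestrict (Icc 0 1) γ₀, hγ₀.domRestrict⟩
    have hΓ₀ : (⨆ t, f (Γ₀ t)) ≤ r := ciSup_le fun t => hr ⟨t, t.2, rfl⟩
    let X : Set C(I, H) := {γ | γ 0 = γ₀ 0 ∧ γ 1 = γ₀ 1}
    have hX : IsClosed X :=
      (isClosed_eq (continuous_eval_const 0) continuous_const).inter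
        (isClosed_eq (continuous_eval_const 1) continuous_const)
    have : CompleteSpace X := hX.completeSpace_coe
    have hXS : ∀ γ : X, (⨆ t, f (γ.1 t)) ∈ S := fun γ =>
      hmem γ.1 (by rw [γ.2.1]; exact h0) (by rw [γ.2.2]; exact h1)
    have hlsc : LowerSemicontinuous (fun γ : X => ⨆ t, f (γ.1 t)) :=
      lowerSemicontinuous_ciSup (fun γ => bddAbove_range_comp_path hfc γ.1) fun t =>
        (hfc.comp ((continuous_eval_const t).comp
          continuous_subtype_val)).lowerSemicontinuous
    obtain ⟨γ, hγ, hmin⟩ := ekeland _ hlsc c (fun γ => hcS _ (hXS γ)) ε hε ⟨Γ₀, rfl, rfl⟩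
    have hcγ := hcS _ (hXS γ)
    obtain ⟨t, ht, hdt⟩ := exists_almost_critical_of_almost_minimal hf hf'.continuous γ.1 hε
      (by rw [γ.2.1]; linarith [hAlt _ h0]) (by rw [γ.2.2]; linarith [hBlt _ h1])
      (fun η e0 e1 => hmin ⟨η, e0.trans γ.2.1, e1.trans γ.2.2⟩)
    dsimp only at hγ
    exact ⟨γ.1 t, by linarith, by linarith, hdt⟩
  choose x hx1 hx2 hx3 using fun n : ℕ => main (1 / ((n : ℝ) + 1)) Nat.one_div_pos_of_nat
  have hs : Tendsto (fun n : ℕ => 1 / ((n : ℝ) + 1)) atTop (𝓝 0) :=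
    tendsto_one_div_add_atTop_nhds_zero_nat
  refine ⟨x, ?_, ?_⟩
  · exact tendsto_of_tendsto_of_tendsto_of_le_of_le tendsto_const_nhds
      (by simpa using hs.const_add c) hx1 hx2
  · exact squeeze_zero (fun n => norm_nonneg _) hx3 (by simpa using hs.const_mul 2)
end

section
/- Let H be a real Hilbert space and let f : H → ℝ be of class C^{1,1}. Suppose that for some a ∈ ℝ the open sublevel set {x ∈ H | f(x) < a} is the union of two nonempty disjoint open sets A and B, and define c := inf over all continuous paths γ : [0,1] → H with γ(0) ∈ A and γ(1) ∈ B of max_{t∈[0,1]} f(γ(t)). If moreover f satisfies the Palais–Smale condition at level c, then c is a critical value of f: there exists x ∈ H with f(x) = c and df(x) = 0; in particular f has a critical point at level c ≥ a. -/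
/-!
The proof is variational and takes place in the complete metric space of continuous paths with
two fixed endpoints `p ∈ A`, `q ∈ B`, equipped with the uniform distance.

If `c` were not a critical value, the Palais–Smale condition would give `ε > 0` with
`‖df‖ ≥ ε` on `{|f - c| ≤ ε}` (`exists_slope_bound`). Pick a path whose maximum is at most `c + ε`
and let `p`, `q` be its endpoints. The functional `γ ↦ max f ∘ γ` is lower semicontinuous and at
least `c` on the paths from `p` to `q`, so Ekeland's variational principle (`ekeland`) gives a path
`γ`, still of maximum at most `c + ε`, such that moving away from `γ` by a distance `d` cannot lower
the maximum by `(ε / 2) d` or more. But `f p, f q < a ≤ c ≤ max f ∘ γ`, so one may push `γ` along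
the normalized negative gradient near its maximum points only, keeping its endpoints; a small push
by `s` lowers the maximum by at least `(3 / 4) ε s` (`exists_lower_path`), a contradiction.

Since the endpoints stay fixed, the case `c = a` needs no separate treatment, and only the
continuity of `df` matters, no gradient flow being involved.
-/

open Filter Set

/-! ### Ekeland's variational principle -/

open Topology in
/-- Ekeland's variational principle on a closed subset `S` of a complete metric space: a point `x`
that no other point of `S` improves at slope `κ`, reached from `x₀` without increasing `ψ`. -/
lemma ekeland_s1 {X : Type*} [MetricSpace X] [CompleteSpace X] {S : Set X} (hS : IsClosed S)
    {ψ : X → ℝ} (hψ : LowerSemicontinuous ψ) {m : ℝ} (hm : ∀ x ∈ S, m ≤ ψ x)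
    {κ : ℝ} (hκ : 0 < κ) {x₀ : X} (hx₀ : x₀ ∈ S) :
    ∃ x ∈ S, ψ x ≤ ψ x₀ ∧ ∀ y ∈ S, ψ y + κ * dist x y ≤ ψ x → y = x := by
  -- `T x` is the set of improvements of `x`; the sequence nearly minimizes `ψ` at each step.
  let T : X → Set X := fun x => {y | y ∈ S ∧ ψ y + κ * dist x y ≤ ψ x}
  have hTbdd : ∀ x, BddBelow (ψ '' T x) := fun x => ⟨m, by
    rintro _ ⟨y, hy, rfl⟩; exact hm y hy.1⟩
  have hTself : ∀ x ∈ S, x ∈ T x := fun x hx => ⟨hx, by simp⟩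
  have hstep : ∀ n : ℕ, ∀ x : X, x ∈ S → ∃ y ∈ T x, ψ y < sInf (ψ '' T x) + 1 / ((n : ℝ) + 1) := by
    intro n x hx
    obtain ⟨_, ⟨y, hy, rfl⟩, h⟩ := exists_lt_of_csInf_lt (s := ψ '' T x) ⟨_, x, hTself x hx, rfl⟩
      (lt_add_of_pos_right (sInf (ψ '' T x)) (Nat.one_div_pos_of_nat (n := n)))
    exact ⟨y, hy, h⟩
  choose! F hFT hFlt using hstep
  let u : ℕ → X := fun n => Nat.rec x₀ (fun k y => F k y) n
  have hu0 : u 0 = x₀ := rfl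
  have hus : ∀ n, u (n + 1) = F n (u n) := fun n => rfl
  have huS : ∀ n, u n ∈ S := by
    intro n
    induction n with
    | zero => exact hx₀
    | succ k ih => rw [hus]; exact (hFT k _ ih).1
  have hT : ∀ n k, u (n + k) ∈ T (u n) := by
    intro n k
    induction k with
    | zero => exact hTself _ (huS n)
    | succ k ih =>
      have h1 := hFT (n + k) _ (huS (n + k))
      rw [← hus] at h1
      refine ⟨h1.1, ?_⟩
      have h2 := ih.2
      have h3 := h1.2
      have h4 := mul_le_mul_of_nonneg_left (dist_triangle (u n) (u (n + k)) (u (n + k + 1))) hκ.le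
      rw [← add_assoc]
      linarith
  have hanti : Antitone (fun n => ψ (u n)) := by
    refine antitone_nat_of_succ_le fun n => ?_
    have := (hT n 1).2
    have h := mul_nonneg hκ.le (dist_nonneg (x := u n) (y := u (n + 1)))
    linarith
  have hlim := tendsto_atTop_ciInf hanti ⟨m, by rintro _ ⟨n, rfl⟩; exact hm _ (huS n)⟩
  have hcau : CauchySeq u := by
    rw [Metric.cauchySeq_iff']
    intro e he
    obtain ⟨N, hN⟩ := Metric.cauchySeq_iff'.1 hlim.cauchySeq (κ * e) (mul_pos hκ he)
    refine ⟨N, fun n hn => ?_⟩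
    obtain ⟨k, rfl⟩ := Nat.exists_eq_add_of_le hn
    have h1 := (hT N k).2
    have h2 := hN (N + k) hn
    rw [Real.dist_eq, abs_lt] at h2
    rw [dist_comm]
    by_contra! h
    have := mul_le_mul_of_nonneg_left h hκ.le
    linarith [h2.1]
  obtain ⟨x, hx⟩ := cauchySeq_tendsto_of_complete hcau
  have hTclosed : ∀ z, IsClosed (T z) := by
    intro z
    refine hS.inter ?_
    have : LowerSemicontinuous (fun y => ψ y + κ * dist z y) :=
      hψ.add (by fun_prop : Continuous fun y => κ * dist z y).lowerSemicontinuous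
    exact this.isClosed_preimage (ψ z)
  have hxT : ∀ n, x ∈ T (u n) := fun n =>
    (hTclosed (u n)).mem_of_tendsto hx (Filter.eventually_atTop.2 ⟨n, fun k hk => by
      obtain ⟨j, rfl⟩ := Nat.exists_eq_add_of_le hk
      exact hT n j⟩)
  refine ⟨x, (hxT 0).1, ?_, ?_⟩
  · have h1 := (hxT 0).2
    rw [hu0] at h1
    have h := mul_nonneg hκ.le (dist_nonneg (x := x₀) (y := x))
    linarith
  · intro y hyS hy
    -- An improvement `y` of the limit improves every `u n`, hence `ψ x ≤ ψ y`.
    have hyT : ∀ n, y ∈ T (u n) := fun n => ⟨hyS, by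
      have h1 := (hxT n).2
      have h4 := mul_le_mul_of_nonneg_left (dist_triangle (u n) x y) hκ.le
      linarith⟩
    have hle : ∀ n : ℕ, ψ x ≤ ψ y + 1 / ((n : ℝ) + 1) := by
      intro n
      have h1 := hFlt n (u n) (huS n)
      rw [← hus] at h1
      have h2 := csInf_le (hTbdd (u n)) ⟨y, hyT n, rfl⟩
      have h3 := (hxT (n + 1)).2
      have h := mul_nonneg hκ.le (dist_nonneg (x := u (n + 1)) (y := x))
      linarith
    have hle' : ψ x ≤ ψ y := by
      have ht : Filter.Tendsto (fun n : ℕ => ψ y + 1 / ((n : ℝ) + 1)) Filter.atTop (𝓝 (ψ y + 0)) :=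
        tendsto_const_nhds.add tendsto_one_div_add_atTop_nhds_zero_nat
      rw [add_zero] at ht
      exact ge_of_tendsto' ht hle
    have h0 : κ * dist x y ≤ 0 := by linarith
    have : dist x y ≤ 0 := by
      by_contra! h
      linarith [mul_pos hκ h]
    exact (dist_le_zero.1 this).symm

/-! ### Differential estimates -/

/-- If the Palais–Smale condition holds at a level `c` that is not critical, the differential is
bounded away from zero near that level. -/
lemma exists_slope_bound {E : Type*} [NormedAddCommGroup E] [NormedSpace ℝ E]
    {f : E → ℝ} (hf : Continuous f) (hf' : Continuous (fderiv ℝ f)) {c : ℝ}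
    (hPS : ∀ x : ℕ → E,
      Tendsto (fun n => f (x n)) atTop (nhds c) →
      Tendsto (fun n => ‖fderiv ℝ f (x n)‖) atTop (nhds 0) →
      ∃ (φ : ℕ → ℕ) (l : E), StrictMono φ ∧ Tendsto (x ∘ φ) atTop (nhds l))
    (hcrit : ¬ ∃ x : E, f x = c ∧ fderiv ℝ f x = 0) :
    ∃ ε > 0, ∀ x, |f x - c| ≤ ε → ε ≤ ‖fderiv ℝ f x‖ := by
  by_contra! h
  have h' : ∀ n : ℕ, ∃ x, |f x - c| ≤ 1 / ((n : ℝ) + 1) ∧ ‖fderiv ℝ f x‖ < 1 / ((n : ℝ) + 1) :=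
    fun n => h _ Nat.one_div_pos_of_nat
  choose x hx1 hx2 using h'
  have hz := tendsto_one_div_add_atTop_nhds_zero_nat (𝕜 := ℝ)
  have t1 : Tendsto (fun n => f (x n)) atTop (nhds c) := by
    rw [tendsto_iff_dist_tendsto_zero]
    exact squeeze_zero (fun _ => dist_nonneg) (fun n => by rw [Real.dist_eq]; exact hx1 n) hz
  have t2 : Tendsto (fun n => ‖fderiv ℝ f (x n)‖) atTop (nhds 0) :=
    squeeze_zero (fun _ => norm_nonneg _) (fun n => (hx2 n).le) hz
  obtain ⟨φ, l, hφ, hl⟩ := hPS x t1 t2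
  refine hcrit ⟨l, ?_, ?_⟩
  · exact tendsto_nhds_unique ((hf.tendsto l).comp hl) (t1.comp hφ.tendsto_atTop)
  · exact norm_eq_zero.1 (tendsto_nhds_unique ((hf'.norm.tendsto l).comp hl)
      (t2.comp hφ.tendsto_atTop))

/-- First-order Taylor estimate for a `C¹` function, uniform over a compact set of base points. -/
lemma uniform_taylor {E : Type*} [NormedAddCommGroup E] [NormedSpace ℝ E]
    {f : E → ℝ} (hf : Differentiable ℝ f) (hf' : Continuous (fderiv ℝ f))
    {K : Set E} (hK : IsCompact K) {η : ℝ} (hη : 0 < η) :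
    ∃ δ > 0, ∀ x ∈ K, ∀ v, ‖v‖ < δ → |f (x + v) - f x - fderiv ℝ f x v| ≤ η * ‖v‖ := by
  have h := hK.uniformContinuousAt_of_continuousAt (fderiv ℝ f)
    (fun x _ => hf'.continuousAt) (Metric.dist_mem_uniformity hη)
  obtain ⟨δ, hδ, h⟩ := Metric.mem_uniformity_dist.1 h
  refine ⟨δ, hδ, fun x hx v hv => ?_⟩
  have := (convex_ball x δ).norm_image_sub_le_of_norm_fderiv_le' (𝕜 := ℝ) (f := f)
    (φ := fderiv ℝ f x) (C := η) (x := x) (y := x + v) (fun y _ => hf y)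
    (fun y hy => ?_) (Metric.mem_ball_self hδ) (by simpa using hv)
  · simpa using this
  · have h1 := h (a := x) (b := y) (by rw [dist_comm]; exact hy) hx
    have h2 : dist (fderiv ℝ f x) (fderiv ℝ f y) < η := h1
    rw [dist_comm, dist_eq_norm] at h2
    exact h2.le

/-! ### Deformation of paths -/

/-- The maximum of `f` along the path `γ`, written as a supremum; for continuous `f` it is attained
since the unit interval is compact. -/
noncomputable def pathMax {E : Type*} [TopologicalSpace E] (f : E → ℝ)
    (γ : C(unitInterval, E)) : ℝ :=
  ⨆ t, f (γ t)

lemma bddAbove_path {E : Type*} [TopologicalSpace E] {f : E → ℝ} (hf : Continuous f)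
    (γ : C(unitInterval, E)) : BddAbove (range fun t => f (γ t)) :=
  (isCompact_range (hf.comp γ.continuous)).bddAbove

lemma pathMax_le_iff {E : Type*} [TopologicalSpace E] {f : E → ℝ} (hf : Continuous f)
    (γ : C(unitInterval, E)) (r : ℝ) : pathMax f γ ≤ r ↔ ∀ t, f (γ t) ≤ r :=
  ciSup_le_iff (bddAbove_path hf γ)

lemma lowerSemicontinuous_pathMax {E : Type*} [TopologicalSpace E] {f : E → ℝ}
    (hf : Continuous f) : LowerSemicontinuous (pathMax (E := E) f) :=
  lowerSemicontinuous_ciSup (fun γ => bddAbove_path hf γ) fun t =>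
    (hf.comp (continuous_eval_const t)).lowerSemicontinuous

/-- Descent step: a path whose endpoints lie strictly below its maximum `M`, and along which `f` has
slope at least `ε` at heights close to `M`, can be moved slightly, with fixed endpoints, so as to
lower its maximum at rate `3 ε / 4`. -/
lemma exists_lower_path {H : Type*} [NormedAddCommGroup H] [InnerProductSpace ℝ H] [CompleteSpace H]
    {f : H → ℝ} (hf : Differentiable ℝ f) (hf' : Continuous (fderiv ℝ f))
    (γ : C(unitInterval, H)) {ε η : ℝ} (hε : 0 < ε) (hη : 0 < η)
    (h0 : f (γ 0) ≤ pathMax f γ - η) (h1 : f (γ 1) ≤ pathMax f γ - η)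
    (hslope : ∀ t, pathMax f γ - η ≤ f (γ t) → ε ≤ ‖fderiv ℝ f (γ t)‖) :
    ∃ s > 0, ∃ γ' : C(unitInterval, H), γ' 0 = γ 0 ∧ γ' 1 = γ 1 ∧ dist γ γ' ≤ s ∧
      pathMax f γ' ≤ pathMax f γ - 3 / 4 * ε * s := by
  have hfc := hf.continuous
  set M := pathMax f γ with hM
  have hMle : ∀ t, f (γ t) ≤ M := (pathMax_le_iff hfc γ M).1 le_rfl
  let g : H → H := fun x => (InnerProductSpace.toDual ℝ H).symm (fderiv ℝ f x)
  have hgc : Continuous g := (InnerProductSpace.toDual ℝ H).symm.continuous.comp hf'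
  have hgn : ∀ x, ‖g x‖ = ‖fderiv ℝ f x‖ := fun x => LinearIsometryEquiv.norm_map _ _
  have hgd : ∀ x, fderiv ℝ f x (g x) = ‖g x‖ ^ 2 := fun x => by
    rw [← InnerProductSpace.toDual_symm_apply, real_inner_self_eq_norm_sq]
  -- The cutoff is `0` below height `M - η` and `1` above height `M - η / 2`.
  let χ : unitInterval → ℝ := fun t => max 0 (min 1 (2 / η * (f (γ t) - (M - η))))
  have hχc : Continuous χ := by
    have := hfc.comp γ.continuous
    simp only [χ]
    fun_prop
  have hχ0 : ∀ t, 0 ≤ χ t := fun t => le_max_left _ _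
  have hχ1 : ∀ t, χ t ≤ 1 := fun t => max_le zero_le_one (min_le_left _ _)
  have hχz : ∀ t, f (γ t) ≤ M - η → χ t = 0 := fun t ht => by
    refine max_eq_left ((min_le_right _ _).trans ?_)
    exact mul_nonpos_of_nonneg_of_nonpos (by positivity) (by linarith)
  have hχo : ∀ t, M - η / 2 ≤ f (γ t) → χ t = 1 := fun t ht => by
    have : 1 ≤ 2 / η * (f (γ t) - (M - η)) := by
      rw [div_mul_eq_mul_div, le_div_iff₀ hη]
      linarith
    simp only [χ]
    rw [min_eq_left this]
    exact max_eq_right zero_le_one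
  -- Dividing by `max ‖g‖ ε` instead of `‖g‖` keeps the field continuous where the gradient vanishes.
  let k : unitInterval → ℝ := fun t => χ t / max ‖g (γ t)‖ ε
  have hmpos : ∀ t, 0 < max ‖g (γ t)‖ ε := fun t => lt_max_of_lt_right hε
  have hgγ : Continuous fun t => g (γ t) := hgc.comp γ.continuous
  have hkc : Continuous k := hχc.div (hgγ.norm.max continuous_const) fun t => (hmpos t).ne'
  have hk0 : ∀ t, 0 ≤ k t := fun t => div_nonneg (hχ0 t) (hmpos t).le
  let w : unitInterval → H := fun t => k t • g (γ t)
  have hwc : Continuous w := hkc.smul hgγ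
  have hwn : ∀ t, ‖w t‖ ≤ 1 := fun t => by
    simp only [w, norm_smul, Real.norm_eq_abs, abs_of_nonneg (hk0 t), k]
    rw [div_mul_eq_mul_div, div_le_one (hmpos t)]
    calc χ t * ‖g (γ t)‖ ≤ 1 * ‖g (γ t)‖ := by gcongr; exact hχ1 t
      _ ≤ _ := by rw [one_mul]; exact le_max_left _ _
  have hwd : ∀ t, fderiv ℝ f (γ t) (w t) = k t * ‖g (γ t)‖ ^ 2 := fun t => by
    simp only [w, map_smul, hgd, smul_eq_mul]
  obtain ⟨δ, hδ, hT⟩ := uniform_taylor hf hf' (isCompact_range γ.continuous)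
    (show (0 : ℝ) < ε / 4 by positivity)
  -- `s ≤ η / (2 ε)` makes the points below height `M - η / 2` harmless.
  let s : ℝ := min (δ / 2) (η / (2 * ε))
  have hs : 0 < s := by positivity
  have hsδ : s < δ := (min_le_left _ _).trans_lt (by linarith)
  have hsη : ε * s ≤ η / 2 := by
    calc ε * s ≤ ε * (η / (2 * ε)) := by gcongr; exact min_le_right _ _
      _ = η / 2 := by field_simp
  let γ' : C(unitInterval, H) := ⟨fun t => γ t + (-s) • w t, by fun_prop⟩
  have hγ' : ∀ t, γ' t = γ t + (-s) • w t := fun t => rfl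
  have hw_zero : ∀ t, f (γ t) ≤ M - η → w t = 0 := fun t ht => by
    simp only [w, k, hχz t ht, zero_div, zero_smul]
  have hvn : ∀ t, ‖(-s) • w t‖ ≤ s := fun t => by
    rw [norm_smul, norm_neg, Real.norm_of_nonneg hs.le]
    exact mul_le_of_le_one_right hs.le (hwn t)
  refine ⟨s, hs, γ', by rw [hγ', hw_zero 0 h0, smul_zero, add_zero],
    by rw [hγ', hw_zero 1 h1, smul_zero, add_zero], ?_, ?_⟩
  · rw [ContinuousMap.dist_le hs.le]
    intro t
    rw [hγ', dist_self_add_right]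
    exact hvn t
  · rw [pathMax_le_iff hfc]
    intro t
    rw [hγ']
    have hb := (abs_le.1 (hT (γ t) ⟨t, rfl⟩ _ ((hvn t).trans_lt hsδ))).2
    rw [map_smul, hwd, smul_eq_mul] at hb
    have hb2 : ε / 4 * ‖(-s) • w t‖ ≤ ε / 4 * s := by gcongr; exact hvn t
    rcases le_total (M - η / 2) (f (γ t)) with ht | ht
    · have hg : ε ≤ ‖g (γ t)‖ := by rw [hgn]; exact hslope t (by linarith)
      have hkg : k t * ‖g (γ t)‖ ^ 2 = ‖g (γ t)‖ := by
        have : ‖g (γ t)‖ ≠ 0 := (hε.trans_le hg).ne'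
        simp only [k, hχo t ht, max_eq_left hg]
        field_simp
      rw [hkg] at hb
      have := mul_le_mul_of_nonneg_left hg hs.le
      have := hMle t
      linarith
    · have : 0 ≤ s * (k t * ‖g (γ t)‖ ^ 2) := by have := hk0 t; positivity
      linarith

/-! ### The mountain pass theorem -/

/-- **Mountain pass theorem.** Under the mountain pass geometry, if `f` satisfies the
Palais–Smale condition at the minimax level `c`, then `c ≥ a` is a critical value of `f`. -/
theorem mountain_pass_critical_value
    {H : Type*} [NormedAddCommGroup H] [InnerProductSpace ℝ H] [CompleteSpace H]
    (f : H → ℝ) (hf : Differentiable ℝ f) (hf' : LocallyLipschitz (fderiv ℝ f))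
    (a : ℝ) (A B : Set H) (hA : IsOpen A) (hB : IsOpen B)
    (hAne : A.Nonempty) (hBne : B.Nonempty) (hdisj : Disjoint A B)
    (hsub : {x : H | f x < a} = A ∪ B)
    (c : ℝ)
    (hc : c = sInf {r : ℝ | ∃ γ : ℝ → H, ContinuousOn γ (Icc 0 1) ∧ γ 0 ∈ A ∧ γ 1 ∈ B ∧
      IsGreatest ((fun t => f (γ t)) '' Icc 0 1) r})
    (hPS : ∀ x : ℕ → H,
      Tendsto (fun n => f (x n)) atTop (nhds c) →
      Tendsto (fun n => ‖fderiv ℝ f (x n)‖) atTop (nhds 0) →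
      ∃ (φ : ℕ → ℕ) (l : H), StrictMono φ ∧ Tendsto (x ∘ φ) atTop (nhds l)) :
    (∃ x : H, f x = c ∧ fderiv ℝ f x = 0) ∧ a ≤ c := by
  have hfc := hf.continuous
  set R := {r : ℝ | ∃ γ : ℝ → H, ContinuousOn γ (Icc 0 1) ∧ γ 0 ∈ A ∧ γ 1 ∈ B ∧
      IsGreatest ((fun t => f (γ t)) '' Icc 0 1) r} with hR
  have haR : ∀ r ∈ R, a ≤ r := by
    rintro r ⟨γ, hγ, hγ0, hγ1, hr⟩
    by_contra! hra
    have hsubset : γ '' Icc 0 1 ⊆ A ∪ B := by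
      rintro _ ⟨t, ht, rfl⟩
      rw [← hsub]
      exact (hr.2 ⟨t, ht, rfl⟩).trans_lt hra
    have hpre : IsPreconnected (γ '' Icc (0 : ℝ) 1) := isPreconnected_Icc.image γ hγ
    have hl := hpre.subset_left_of_subset_union hA hB hdisj hsubset
      ⟨γ 0, ⟨0, by simp, rfl⟩, hγ0⟩
    exact hdisj.le_bot ⟨hl ⟨1, by simp, rfl⟩, hγ1⟩
  have hmem : ∀ γ : C(unitInterval, H), γ 0 ∈ A → γ 1 ∈ B → pathMax f γ ∈ R := by
    intro γ h0 h1
    refine ⟨fun t => γ (projIcc 0 1 zero_le_one t),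
      (γ.continuous.comp continuous_projIcc).continuousOn, ?_, ?_, ?_, ?_⟩
    · simpa [projIcc_left] using h0
    · simpa [projIcc_right] using h1
    · obtain ⟨t, -, ht⟩ := isCompact_univ.exists_isMaxOn (f := fun t => f (γ t))
        (univ_nonempty) (hfc.comp γ.continuous).continuousOn
      refine ⟨t, t.2, ?_⟩
      simp only [projIcc_val]
      refine le_antisymm ((pathMax_le_iff hfc γ _).1 le_rfl t) ?_
      exact (pathMax_le_iff hfc γ _).2 fun u => ht (mem_univ u)
    · rintro _ ⟨t, -, rfl⟩
      exact (pathMax_le_iff hfc γ _).1 le_rfl _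
  have hRne : R.Nonempty := by
    obtain ⟨p, hp⟩ := hAne
    obtain ⟨q, hq⟩ := hBne
    refine ⟨_, hmem ⟨fun t => AffineMap.lineMap p q (t : ℝ), ?_⟩ ?_ ?_⟩
    · exact AffineMap.lineMap_continuous.comp continuous_subtype_val
    · simpa using hp
    · simpa using hq
  have hac : a ≤ c := hc ▸ le_csInf hRne haR
  refine ⟨?_, hac⟩
  by_contra hcrit
  obtain ⟨ε, hε, hslope⟩ := exists_slope_bound hfc hf'.continuous hPS hcrit
  obtain ⟨r, ⟨σ, hσ, hσ0, hσ1, hσr⟩, hrc⟩ := exists_lt_of_csInf_lt hRne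
    (show sInf R < c + ε by rw [← hc]; linarith)
  let γ₀ : C(unitInterval, H) := ⟨fun t => σ t, hσ.domRestrict⟩
  have hγ₀ : pathMax f γ₀ ≤ c + ε := ((pathMax_le_iff hfc γ₀ r).2
    fun t => hσr.2 ⟨t, t.2, rfl⟩).trans hrc.le
  let S : Set C(unitInterval, H) := {γ | γ 0 = σ 0 ∧ γ 1 = σ 1}
  have hSc : IsClosed S :=
    (isClosed_eq (continuous_eval_const 0) continuous_const).inter
      (isClosed_eq (continuous_eval_const 1) continuous_const)
  have hSm : ∀ γ ∈ S, c ≤ pathMax f γ := fun γ hγ =>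
    hc ▸ csInf_le ⟨a, haR⟩ (hmem γ (hγ.1 ▸ hσ0) (hγ.2 ▸ hσ1))
  obtain ⟨γ, hγS, hγle, hγmin⟩ := ekeland_s1 hSc (lowerSemicontinuous_pathMax hfc) hSm
    (half_pos hε) (x₀ := γ₀) ⟨rfl, rfl⟩
  have hM := hSm γ hγS
  have hMu := hγle.trans hγ₀
  have hfp : f (σ 0) < a := by
    have : σ 0 ∈ {x : H | f x < a} := hsub ▸ Or.inl hσ0
    exact this
  have hfq : f (σ 1) < a := by
    have : σ 1 ∈ {x : H | f x < a} := hsub ▸ Or.inr hσ1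
    exact this
  -- `η` is small enough for both endpoints to lie below height `M - η`, and for the slope bound.
  let η : ℝ := min ε (pathMax f γ - max (f (σ 0)) (f (σ 1)))
  have hη : 0 < η := lt_min hε (by linarith [max_lt hfp hfq])
  have hηε : η ≤ ε := min_le_left _ _
  have hη2 : η ≤ pathMax f γ - max (f (σ 0)) (f (σ 1)) := min_le_right _ _
  obtain ⟨s, hs, γ', h0, h1, hd, hlow⟩ := exists_lower_path hf hf'.continuous γ hε hη
    (by rw [hγS.1]; linarith [le_max_left (f (σ 0)) (f (σ 1))])
    (by rw [hγS.2]; linarith [le_max_right (f (σ 0)) (f (σ 1))])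
    (fun t ht => hslope _ (by
      have := (pathMax_le_iff hfc γ _).1 le_rfl t
      rw [abs_le]; constructor <;> linarith))
  have hεs := mul_pos hε hs
  have heq := hγmin γ' ⟨h0.trans hγS.1, h1.trans hγS.2⟩ (by
    have := mul_le_mul_of_nonneg_left hd (half_pos hε).le
    linarith)
  rw [heq] at hlow
  linarith
end

section
/- Let H be a real Hilbert space, let f : H → ℝ be of class C^{1,1}, and let ∇f denote its gradient with respect to the inner product. Let V : H → H be the vector field V(x) := −∇f(x)/√(1 + ‖∇f(x)‖²), and let φ : ℝ × H → H be a map such that φ(0,u) = u for every u ∈ H and, for every u ∈ H, the curve t ↦ φ(t,u) is differentiable with derivative V(φ(t,u)) (φ is the flow of V). Let Γ be a nonempty collection of subsets of H which is positively invariant under φ, meaning that for every A ∈ Γ and every t ≥ 0 the image φ(t, A) := {φ(t,x) | x ∈ A} belongs to Γ. If the minimax value c := inf_{A ∈ Γ} sup_{x ∈ A} f(x) is finite, then f admits a Palais–Smale sequence at level c: there is a sequence (x_n) in H with f(x_n) → c and ‖df(x_n)‖ → 0. -/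
/-!
The proof is the standard deformation argument. Along a flow line of `V` the function `f` decreases
at the rate `‖∇f‖² / √(1 + ‖∇f‖²)` (`hasDerivAt_comp_flow`), and this rate is bounded below by
`ε² / (1 + ε)` wherever `‖∇f‖ ≥ ε` (`rate_lower_bound`). If for some `ε > 0` every point with
`|f - c| ≤ ε` had `‖∇f‖ ≥ ε`, then flowing for a fixed time `T` would push the sublevel set
`{f ≤ c + ε}` into `{f ≤ c - ε}` (`flow_deformation`). Applied to a set `A ∈ Γ` with
`sup_A f < c + ε`, this gives the set `φ(T, A) ∈ Γ` with `sup f ≤ c - ε < c`, contradicting the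
definition of `c`. So for every `ε > 0` there is a point with `|f - c| ≤ ε` and `‖∇f‖ < ε`, and
taking `ε = 1 / (n + 1)` gives the sequence.
-/

open Filter Set

/-- The speed `s² / √(1 + s²)` at which `f` decreases is bounded below for `s ≥ ε`, since
`√(1 + s²) ≤ 1 + s` and `s ↦ s² / (1 + s)` is increasing. -/
lemma rate_lower_bound {ε s : ℝ} (hε : 0 < ε) (hs : ε ≤ s) :
    ε ^ 2 / (1 + ε) ≤ (Real.sqrt (1 + s ^ 2))⁻¹ * s ^ 2 := by
  have hs0 : 0 < s := hε.trans_le hs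
  have h1 : Real.sqrt (1 + s ^ 2) ≤ 1 + s :=
    Real.sqrt_le_iff.2 ⟨by positivity, by nlinarith⟩
  have h2 : 0 < Real.sqrt (1 + s ^ 2) := Real.sqrt_pos.2 (by positivity)
  calc ε ^ 2 / (1 + ε) ≤ s ^ 2 / (1 + s) := by
        rw [div_le_div_iff₀ (by positivity) (by positivity)]
        nlinarith [mul_nonneg (mul_pos hε hs0).le (sub_nonneg.2 hs)]
    _ = (1 + s)⁻¹ * s ^ 2 := by rw [div_eq_inv_mul]
    _ ≤ _ := by gcongr

section Flow

variable {H : Type*} [NormedAddCommGroup H] [InnerProductSpace ℝ H] [CompleteSpace H]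

lemma norm_fderiv_eq_norm_gradient (f : H → ℝ) (x : H) : ‖fderiv ℝ f x‖ = ‖gradient f x‖ := by
  simp [gradient]

lemma hasDerivAt_comp_flow {f : H → ℝ} (hf : Differentiable ℝ f) {V : H → H}
    (hV : ∀ x : H, V x = -(Real.sqrt (1 + ‖gradient f x‖ ^ 2))⁻¹ • gradient f x)
    {φ : ℝ → H → H} (hφ : ∀ (u : H) (t : ℝ), HasDerivAt (fun s => φ s u) (V (φ t u)) t)
    (u : H) (t : ℝ) :
    HasDerivAt (fun s => f (φ s u))
      (-((Real.sqrt (1 + ‖gradient f (φ t u)‖ ^ 2))⁻¹ * ‖gradient f (φ t u)‖ ^ 2)) t := by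
  have h := (hf (φ t u)).hasGradientAt.hasFDerivAt.comp_hasDerivAt t (hφ u t)
  refine h.congr_deriv ?_
  rw [InnerProductSpace.toDual_apply_apply, hV, inner_smul_right, real_inner_self_eq_norm_sq,
    neg_mul]

/-- If `‖∇f‖ ≥ ε` on the strip `|f - c| ≤ ε`, the flow carries `{f ≤ c + ε}` into `{f ≤ c - ε}`
within a time that does not depend on the starting point. -/
lemma flow_deformation {f : H → ℝ} (hf : Differentiable ℝ f) {V : H → H}
    (hV : ∀ x : H, V x = -(Real.sqrt (1 + ‖gradient f x‖ ^ 2))⁻¹ • gradient f x)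
    {φ : ℝ → H → H} (hφ0 : ∀ u : H, φ 0 u = u)
    (hφ : ∀ (u : H) (t : ℝ), HasDerivAt (fun s => φ s u) (V (φ t u)) t)
    {c ε : ℝ} (hε : 0 < ε) (hgrad : ∀ x, |f x - c| ≤ ε → ε ≤ ‖gradient f x‖) :
    ∃ T : ℝ, 0 ≤ T ∧ ∀ u, f u ≤ c + ε → f (φ T u) ≤ c - ε := by
  set δ : ℝ := ε ^ 2 / (1 + ε) with hδ
  have hδ0 : 0 < δ := by positivity
  -- At speed at least `δ`, time `2 * ε / δ` suffices to cross the strip, which has height `2 * ε`.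
  refine ⟨2 * ε / δ, by positivity, fun u hu => ?_⟩
  set T : ℝ := 2 * ε / δ with hT
  have hT0 : 0 ≤ T := by positivity
  have hd := hasDerivAt_comp_flow hf hV hφ u
  have hanti : Antitone (fun s => f (φ s u)) :=
    antitone_of_deriv_nonpos (fun t => (hd t).differentiableAt) fun t => by
      rw [(hd t).deriv]
      exact neg_nonpos.2 (by positivity)
  by_contra! hcon
  -- By monotonicity, a trajectory still above `c - ε` at time `T` stays in the strip until then.
  have hbound : ∀ t ∈ interior (Icc 0 T), deriv (fun s => f (φ s u)) t ≤ -δ := by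
    intro t ht
    have ht := interior_subset ht
    rw [(hd t).deriv]
    refine neg_le_neg (rate_lower_bound hε (hgrad _ ?_))
    have h1 : f (φ t u) ≤ f (φ 0 u) := hanti ht.1
    have h2 : f (φ T u) ≤ f (φ t u) := hanti ht.2
    rw [hφ0] at h1
    exact abs_le.2 ⟨by linarith, by linarith⟩
  have hmvt := (convex_Icc 0 T).image_sub_le_mul_sub_of_deriv_le
    (fun t _ => (hd t).continuousAt.continuousWithinAt)
    (fun t _ => (hd t).differentiableAt.differentiableWithinAt) hbound
    0 ⟨le_rfl, hT0⟩ T ⟨hT0, le_rfl⟩ hT0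
  have hδT : δ * T = 2 * ε := by rw [hT]; field_simp
  simp only [hφ0] at hmvt
  nlinarith

end Flow

/-- **General minimax principle.** Let `f : H → ℝ` be `C^{1,1}` on a real Hilbert space,
let `φ` be the flow of the bounded negative-gradient-like vector field
`V = -∇f / √(1 + ‖∇f‖²)`, and let `Γ` be a nonempty collection of subsets of `H` which is
positively invariant under `φ`. If the minimax value `c = inf_{A ∈ Γ} sup_A f` is finite,
then `f` admits a Palais–Smale sequence at level `c`. -/
theorem general_minimax_principle
    {H : Type*} [NormedAddCommGroup H] [InnerProductSpace ℝ H] [CompleteSpace H]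
    (f : H → ℝ) (hf : Differentiable ℝ f) (hf' : LocallyLipschitz (fderiv ℝ f))
    (V : H → H)
    (hV : ∀ x : H, V x = -(Real.sqrt (1 + ‖gradient f x‖ ^ 2))⁻¹ • gradient f x)
    (φ : ℝ → H → H)
    (hφ0 : ∀ u : H, φ 0 u = u)
    (hφ : ∀ (u : H) (t : ℝ), HasDerivAt (fun s => φ s u) (V (φ t u)) t)
    (Γ : Set (Set H)) (hΓ : Γ.Nonempty)
    (hinv : ∀ A ∈ Γ, ∀ t : ℝ, 0 ≤ t → (φ t '' A) ∈ Γ)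
    (c : ℝ)
    (hc : (⨅ A ∈ Γ, ⨆ x ∈ A, (f x : EReal)) = (c : EReal)) :
    ∃ x : ℕ → H,
      Tendsto (fun n => f (x n)) atTop (nhds c) ∧
      Tendsto (fun n => ‖fderiv ℝ f (x n)‖) atTop (nhds 0) := by
  have key : ∀ ε : ℝ, 0 < ε → ∃ x, |f x - c| ≤ ε ∧ ‖gradient f x‖ < ε := by
    intro ε hε
    by_contra! hgrad
    obtain ⟨T, hT0, hT⟩ := flow_deformation hf hV hφ0 hφ hε hgrad
    have hlt : (⨅ A ∈ Γ, ⨆ x ∈ A, (f x : EReal)) < ((c + ε : ℝ) : EReal) := by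
      rw [hc]
      exact EReal.coe_lt_coe_iff.2 (by linarith)
    simp only [iInf_lt_iff] at hlt
    obtain ⟨A, hA, hsup⟩ := hlt
    have hle : (⨅ A ∈ Γ, ⨆ x ∈ A, (f x : EReal)) ≤ ((c - ε : ℝ) : EReal) := by
      refine (iInf₂_le _ (hinv A hA T hT0)).trans (iSup₂_le ?_)
      rintro _ ⟨u, hu, rfl⟩
      refine EReal.coe_le_coe_iff.2 (hT u (EReal.coe_le_coe_iff.1 ?_))
      exact (le_iSup₂ (f := fun x (_ : x ∈ A) => (f x : EReal)) u hu).trans hsup.le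
    rw [hc, EReal.coe_le_coe_iff] at hle
    linarith
  choose x hx using fun n : ℕ => key (1 / ((n : ℝ) + 1)) (by positivity)
  refine ⟨x, ?_, ?_⟩
  · rw [tendsto_iff_dist_tendsto_zero]
    exact squeeze_zero (fun _ => dist_nonneg) (fun n => (hx n).1)
      tendsto_one_div_add_atTop_nhds_zero_nat
  · refine squeeze_zero (fun _ => norm_nonneg _) (fun n => ?_)
      tendsto_one_div_add_atTop_nhds_zero_nat
    rw [norm_fderiv_eq_norm_gradient]
    exact (hx n).2.le
end

section
/- Let H be a real Hilbert space and let f : H → ℝ be of class C^{1,1} which satisfies the Palais–Smale condition at every level. Suppose that for some integer k ≥ 0 and some a ∈ ℝ the sublevel set S := {x ∈ H | f(x) < a} is nonempty and its k-th homotopy group is nontrivial (for k = 0 this means that S is not path-connected; for k ≥ 1 it means that π_k(S, x₀) ≠ 0 for some basepoint x₀ ∈ S). Then f has a critical point x (i.e. df(x) = 0) with f(x) ≥ a. -/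
open Filter Set

/-!
The proof is a minimax argument on a space of maps, which replaces the negative gradient flow.

Suppose `f` has no critical point at a level `≥ a`. Let `T` be a compact metric space, `B ⊆ T`
closed, and `g₀ : T → H` continuous with `f ∘ g₀ < a` on `B`. Consider the complete metric space
`Γ` of continuous maps `T → H` that agree with `g₀` on `B`, with the functional
`I g = max (f ∘ g)`. If `I ≥ a` on all of `Γ`, then Ekeland's variational principle
(`exists_ekeland_point`) yields, for each `ε > 0`, an `ε`-minimizer `g` of `I` that cannot be
improved at a rate better than `ε`. Pushing `g` along the normalized negative gradient, cut off near
`B`, shows that `f` has slope at most `2ε` at some point where `f ∘ g` attains its maximum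
(`exists_almost_critical`). Letting `ε → 0` gives a Palais–Smale sequence at the level
`inf I ≥ a`, hence a critical point there, a contradiction. So `g₀|B` extends to a map of `T` into
the sublevel set `{f < a}` (`exists_extension_into_sublevel`).

Two generalized loops in the sublevel set are joined by the straight-line homotopy in `H`. Applying
the extension result to `T = I × I^k`, with `B` the set of all `(t, y)` with `t ∈ {0, 1}` or `y` in
the boundary of the cube, makes them homotopic inside the sublevel set. For `k = 0` the same
argument with `T = I` and `B = {0, 1}` joins any two points by a path.
-/

open scoped Topology unitInterval

/-- Ekeland's variational principle: starting from any point `x₀`, there is a point at which `F` is not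
larger and from which `F` nowhere decreases at a rate greater than `ε`. -/
lemma exists_ekeland_point {X : Type*} [MetricSpace X] [CompleteSpace X] (F : X → ℝ)
    (hF : LowerSemicontinuous F) (m : ℝ) (hm : ∀ x, m ≤ F x) (ε : ℝ) (hε : 0 < ε) (x₀ : X) :
    ∃ x, F x ≤ F x₀ ∧ ∀ y, F x ≤ F y + ε * dist x y := by
  -- The relation `y ∈ S x` (`y` lies below `x`) is a partial order; a minimal element is the limit of a sequence
  -- each of whose terms almost minimizes `F` among the points below the previous one.
  set S : X → Set X := fun x => {y | F y + ε * dist x y ≤ F x} with hS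
  have hself : ∀ x, x ∈ S x := fun x => by simp [hS]
  have htrans : ∀ x y z, y ∈ S x → z ∈ S y → z ∈ S x := by
    intro x y z hy hz
    simp only [hS, mem_ofPred_eq] at *
    nlinarith [dist_triangle x y z]
  have hcl : ∀ x, IsClosed (S x) := by
    intro x
    have h1 : LowerSemicontinuous fun y => F y + ε * dist x y :=
      hF.add (Continuous.lowerSemicontinuous (by fun_prop))
    exact h1.isClosed_preimage (F x)
  have hex : ∀ (n : ℕ) (x : X), ∃ y ∈ S x, ∀ z ∈ S x, F y ≤ F z + (1 / 2) ^ n := by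
    intro n x
    have hbdd : BddBelow (F '' S x) := ⟨m, by rintro _ ⟨y, -, rfl⟩; exact hm y⟩
    have hlt : sInf (F '' S x) < sInf (F '' S x) + (1 / 2 : ℝ) ^ n := by
      have : (0 : ℝ) < (1 / 2) ^ n := by positivity
      linarith
    obtain ⟨_, ⟨y, hy, rfl⟩, hlt'⟩ := exists_lt_of_csInf_lt
      (Set.Nonempty.image F ⟨x, hself x⟩) hlt
    refine ⟨y, hy, fun z hz => ?_⟩
    have := csInf_le hbdd ⟨z, hz, rfl⟩
    linarith
  choose nxt hnxt hmin using hex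
  let u : ℕ → X := fun n => Nat.rec x₀ (fun n x => nxt n x) n
  have hu : ∀ n, u (n + 1) ∈ S (u n) := fun n => hnxt n (u n)
  have humin : ∀ n, ∀ z ∈ S (u n), F (u (n + 1)) ≤ F z + (1 / 2) ^ n := fun n => hmin n (u n)
  have hnest : ∀ n j, u (n + j) ∈ S (u n) := by
    intro n j
    induction j with
    | zero => exact hself _
    | succ j ih => exact htrans _ _ _ ih (hu (n + j))
  have hclose : ∀ n, ∀ y ∈ S (u (n + 1)), dist (u (n + 1)) y ≤ (1 / 2) ^ n / ε := by
    intro n y hy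
    have h1 := humin n y (htrans _ _ _ (hu n) hy)
    have h2 : F y + ε * dist (u (n + 1)) y ≤ F (u (n + 1)) := hy
    rw [le_div_iff₀ hε]
    nlinarith
  have hlim0 : Tendsto (fun n : ℕ => (1 / 2 : ℝ) ^ n / ε) atTop (𝓝 0) := by
    have := (tendsto_pow_atTop_nhds_zero_of_lt_one (r := (1 / 2 : ℝ)) (by norm_num)
      (by norm_num)).div_const ε
    simpa using this
  have hcau : CauchySeq fun n => u (n + 1) := by
    refine cauchySeq_of_le_tendsto_0' _ (fun n p hnp => ?_) hlim0
    obtain ⟨j, rfl⟩ := Nat.exists_eq_add_of_le hnp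
    refine hclose n _ ?_
    have := hnest (n + 1) j
    rwa [show n + 1 + j = n + j + 1 by ring] at this
  obtain ⟨x, hx⟩ := cauchySeq_tendsto_of_complete hcau
  have hxS : ∀ n, x ∈ S (u n) := by
    intro n
    refine (hcl (u n)).mem_of_tendsto hx ?_
    filter_upwards [eventually_ge_atTop n] with p hp
    obtain ⟨j, hj⟩ := Nat.exists_eq_add_of_le (show n ≤ p + 1 by omega)
    rw [hj]
    exact hnest n j
  refine ⟨x, ?_, fun y => ?_⟩
  · have h : F x + ε * dist x₀ x ≤ F x₀ := hxS 0
    nlinarith [dist_nonneg (x := x₀) (y := x)]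
  · by_contra! hlt
    have hy : y ∈ S x := hlt.le
    have hxy : Tendsto (fun n => u (n + 1)) atTop (𝓝 y) :=
      tendsto_iff_dist_tendsto_zero.2 <| squeeze_zero (fun _ => dist_nonneg)
        (fun n => hclose n y (htrans _ _ _ (hxS (n + 1)) hy)) hlim0
    obtain rfl := tendsto_nhds_unique hx hxy
    simp at hlt

/-- If `max (f ∘ g)` cannot be decreased at a rate better than `ε` by moving `g` away from `B`,
then `f` has slope at most `2ε` at a point where `f ∘ g` is maximal. -/
lemma exists_almost_critical {H : Type*} [NormedAddCommGroup H] [InnerProductSpace ℝ H]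
    [CompleteSpace H] {T : Type*} [MetricSpace T] [CompactSpace T]
    (f : H → ℝ) (hf : Differentiable ℝ f) (hf' : Continuous (fderiv ℝ f))
    (B : Set T) (b : ℝ) (g : C(T, H)) (hb : ∀ t ∈ B, f (g t) ≤ b)
    (M : ℝ) (hM : ∀ t, f (g t) ≤ M) (hbM : b < M) (ε : ℝ) (hε : 0 < ε)
    (hE : ∀ h : C(T, H), (∀ t ∈ B, h t = g t) → ∃ t, M ≤ f (h t) + ε * dist g h) :
    ∃ x, f x = M ∧ ‖fderiv ℝ f x‖ ≤ 2 * ε := by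
  have hfc := hf.continuous
  set G : H → H := fun x => (InnerProductSpace.toDual ℝ H).symm (fderiv ℝ f x) with hG
  have hGc : Continuous G := (InnerProductSpace.toDual ℝ H).symm.continuous.comp hf'
  have hGn : ∀ x, ‖G x‖ = ‖fderiv ℝ f x‖ := fun x =>
    (InnerProductSpace.toDual ℝ H).symm.norm_map _
  have hGa : ∀ x v, fderiv ℝ f x v = inner ℝ (G x) v := fun x v => by
    simp [hG]
  -- The cutoff is `1` where `f ∘ g` is maximal and vanishes on `B`.
  set ψ : T → ℝ := fun t => max 0 ((f (g t) - b) / (M - b)) with hψ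
  have hψc : Continuous ψ := by fun_prop
  have hψ0 : ∀ t, 0 ≤ ψ t := fun t => le_max_left _ _
  have hψ1 : ∀ t, ψ t ≤ 1 := fun t => max_le zero_le_one <| by
    rw [div_le_one (by linarith)]; linarith [hM t]
  -- Dividing by `max ‖G‖ ε` instead of `‖G‖` keeps the field continuous where the gradient vanishes.
  have hmax : ∀ x, 0 < max ‖G x‖ ε := fun x => lt_max_of_lt_right hε
  have hwc : Continuous fun t => -((ψ t * (max ‖G (g t)‖ ε)⁻¹) • G (g t)) := by
    refine Continuous.neg (Continuous.smul (hψc.mul (Continuous.inv₀ ?_ ?_)) ?_)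
    · fun_prop
    · exact fun t => (hmax _).ne'
    · fun_prop
  set w : C(T, H) := ⟨_, hwc⟩ with hw
  have hwapp : ∀ t, w t = -((ψ t * (max ‖G (g t)‖ ε)⁻¹) • G (g t)) := fun t => rfl
  have hw1 : ∀ t, ‖w t‖ ≤ 1 := by
    intro t
    have h1 : (max ‖G (g t)‖ ε)⁻¹ * ‖G (g t)‖ ≤ 1 := by
      rw [inv_mul_le_iff₀ (hmax _)]; simp
    have h2 : 0 ≤ (max ‖G (g t)‖ ε)⁻¹ * ‖G (g t)‖ :=
      mul_nonneg (inv_nonneg.2 (hmax _).le) (norm_nonneg _)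
    rw [hwapp, norm_neg, norm_smul, Real.norm_of_nonneg
      (mul_nonneg (hψ0 t) (inv_nonneg.2 (hmax _).le)), mul_assoc]
    exact mul_le_one₀ (hψ1 t) h2 h1
  have hwB : ∀ t ∈ B, w t = 0 := by
    intro t ht
    have : ψ t = 0 := max_eq_left <|
      div_nonpos_of_nonpos_of_nonneg (by linarith [hb t ht]) (by linarith)
    simp [hwapp, this]
  set s : ℕ → ℝ := fun n => 1 / ((n : ℝ) + 1) with hs
  have hs0 : ∀ n, 0 < s n := fun n => by positivity
  have hslim : Tendsto s atTop (𝓝 0) := tendsto_one_div_add_atTop_nhds_zero_nat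
  have hstep : ∀ n, ∃ t, M ≤ f (g t + s n • w t) + ε * s n := by
    intro n
    obtain ⟨t, ht⟩ := hE (g + s n • w) (fun t ht => by simp [hwB t ht])
    refine ⟨t, ht.trans ?_⟩
    have hd : dist g (g + s n • w) ≤ s n := by
      refine (ContinuousMap.dist_le (hs0 n).le).2 fun x => ?_
      simp only [ContinuousMap.add_apply, ContinuousMap.smul_apply, dist_self_add_right, norm_smul,
        Real.norm_of_nonneg (hs0 n).le]
      exact mul_le_of_le_one_right (hs0 n).le (hw1 x)
    have := mul_le_mul_of_nonneg_left hd hε.le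
    simp only [ContinuousMap.add_apply, ContinuousMap.smul_apply]
    linarith
  choose τ hτ using hstep
  obtain ⟨t₀, φ, hφ, hlim⟩ := CompactSpace.tendsto_subseq τ
  have hsφ : Tendsto (fun n => s (φ n)) atTop (𝓝 0) := hslim.comp hφ.tendsto_atTop
  have hgl : Tendsto (fun n => g (τ (φ n))) atTop (𝓝 (g t₀)) :=
    (g.continuous.tendsto t₀).comp hlim
  have hwl : Tendsto (fun n => w (τ (φ n))) atTop (𝓝 (w t₀)) :=
    (w.continuous.tendsto t₀).comp hlim
  have hhl : Tendsto (fun n => g (τ (φ n)) + s (φ n) • w (τ (φ n))) atTop (𝓝 (g t₀)) := by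
    simpa using hgl.add (hsφ.smul hwl)
  have hval : f (g t₀) = M := by
    refine le_antisymm (hM t₀) ?_
    have h1 : Tendsto (fun n => f (g (τ (φ n)) + s (φ n) • w (τ (φ n))) + ε * s (φ n)) atTop
        (𝓝 (f (g t₀) + ε * 0)) :=
      ((hfc.tendsto _).comp hhl).add (hsφ.const_mul ε)
    have := ge_of_tendsto' h1 (fun n => hτ (φ n))
    simpa using this
  have hstrict : HasStrictFDerivAt f (fderiv ℝ f (g t₀)) (g t₀) :=
    hasStrictFDerivAt_of_hasFDerivAt_of_continuousAt
      (Eventually.of_forall fun x => (hf x).hasFDerivAt) hf'.continuousAt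
  have hlittle := hstrict.isLittleO.def hε
  have hev := (hhl.prodMk_nhds hgl).eventually hlittle
  have hslope : -(2 * ε) ≤ fderiv ℝ f (g t₀) (w t₀) := by
    refine ge_of_tendsto (((fderiv ℝ f (g t₀)).continuous.tendsto _).comp hwl) ?_
    filter_upwards [hev] with n hn
    have h1 := hτ (φ n)
    have h2 := hM (τ (φ n))
    have hsn := hs0 (φ n)
    simp only [add_sub_cancel_left, map_smul, norm_smul, Real.norm_of_nonneg hsn.le,
      smul_eq_mul] at hn
    have h3 := (le_abs_self _).trans (Real.norm_eq_abs _ ▸ hn)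
    have h4 : ε * (s (φ n) * ‖w (τ (φ n))‖) ≤ ε * s (φ n) :=
      mul_le_mul_of_nonneg_left (mul_le_of_le_one_right hsn.le (hw1 _)) hε.le
    have h5 : 0 ≤ s (φ n) * (fderiv ℝ f (g t₀) (w (τ (φ n))) + 2 * ε) := by linarith
    have := nonneg_of_mul_nonneg_right h5 hsn
    simp only [Function.comp_apply]
    linarith
  refine ⟨g t₀, hval, ?_⟩
  have hψt : ψ t₀ = 1 := by
    simp only [hψ, hval]
    rw [div_self (by linarith)]
    norm_num
  rw [hGa, hwapp, hψt, one_mul, inner_neg_right, inner_smul_right,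
    real_inner_self_eq_norm_sq] at hslope
  rw [← hGn]
  by_contra! hlt
  rw [max_eq_left (by linarith)] at hslope
  have : ‖G (g t₀)‖⁻¹ * ‖G (g t₀)‖ ^ 2 = ‖G (g t₀)‖ := by
    have : ‖G (g t₀)‖ ≠ 0 := by linarith
    field_simp
  linarith

/-- Without critical points at levels `≥ a`, every map on a compact metric space can be changed off
a closed set `B`, where `f` is already below `a`, so as to take values in the sublevel set. -/
lemma exists_extension_into_sublevel {H : Type*} [NormedAddCommGroup H] [InnerProductSpace ℝ H]
    [CompleteSpace H] {T : Type*} [MetricSpace T] [CompactSpace T]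
    (f : H → ℝ) (hf : Differentiable ℝ f) (hf' : Continuous (fderiv ℝ f))
    (hPS : ∀ c : ℝ, ∀ x : ℕ → H,
      Tendsto (fun n => f (x n)) atTop (nhds c) →
      Tendsto (fun n => ‖fderiv ℝ f (x n)‖) atTop (nhds 0) →
      ∃ (φ : ℕ → ℕ) (l : H), StrictMono φ ∧ Tendsto (x ∘ φ) atTop (nhds l))
    (a : ℝ) (hcrit : ¬ ∃ x : H, fderiv ℝ f x = 0 ∧ a ≤ f x)
    (B : Set T) (hB : IsClosed B) (g₀ : C(T, H)) (hg₀ : ∀ t ∈ B, f (g₀ t) < a) :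
    ∃ g : C(T, H), (∀ t ∈ B, g t = g₀ t) ∧ ∀ t, f (g t) < a := by
  by_contra! hno
  have hfc := hf.continuous
  have : Nonempty T := ⟨(hno g₀ fun _ _ => rfl).choose⟩
  obtain ⟨b, hba, hb⟩ : ∃ b < a, ∀ t ∈ B, f (g₀ t) ≤ b := by
    rcases B.eq_empty_or_nonempty with rfl | hne
    · exact ⟨a - 1, by linarith, by simp⟩
    · obtain ⟨t, ht, hmax⟩ := hB.isCompact.exists_isMaxOn hne
        (f := fun t => f (g₀ t)) (by fun_prop)
      exact ⟨f (g₀ t), hg₀ t ht, fun t' ht' => hmax ht'⟩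
  let Γ : Set C(T, H) := {g | ∀ t ∈ B, g t = g₀ t}
  have hΓ : IsClosed Γ := by
    have : Γ = ⋂ t ∈ B, {g | g t = g₀ t} := by ext g; simp [Γ]
    rw [this]
    exact isClosed_biInter fun t _ => isClosed_eq (by fun_prop) continuous_const
  have : CompleteSpace Γ := hΓ.completeSpace_coe
  have hbdd : ∀ g : C(T, H), BddAbove (range fun t => f (g t)) := fun g =>
    (isCompact_range (by fun_prop)).bddAbove
  let F : Γ → ℝ := fun g => ⨆ t, f (g.1 t)
  have hle : ∀ (g : Γ) t, f (g.1 t) ≤ F g := fun g t => le_ciSup (hbdd g.1) t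
  have hatt : ∀ g : Γ, ∃ t, F g ≤ f (g.1 t) := by
    intro g
    obtain ⟨t, -, ht⟩ := isCompact_univ.exists_isMaxOn univ_nonempty
      (f := fun t => f (g.1 t)) (by fun_prop)
    exact ⟨t, ciSup_le fun t' => ht (mem_univ t')⟩
  have hFlsc : LowerSemicontinuous F := by
    refine lowerSemicontinuous_ciSup (fun g => hbdd g.1) fun t => ?_
    refine Continuous.lowerSemicontinuous ?_
    fun_prop
  have hFa : ∀ g, a ≤ F g := by
    intro g
    obtain ⟨t, ht⟩ := hno g.1 g.2
    exact ht.trans (hle g t)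
  have hbddF : BddBelow (range F) := ⟨a, by rintro _ ⟨g, rfl⟩; exact hFa g⟩
  have : Nonempty Γ := ⟨⟨g₀, fun _ _ => rfl⟩⟩
  set c := ⨅ g, F g with hc
  have hac : a ≤ c := le_ciInf hFa
  set s : ℕ → ℝ := fun n => 1 / ((n : ℝ) + 1) with hs
  have hs0 : ∀ n, 0 < s n := fun n => by positivity
  have hslim : Tendsto s atTop (𝓝 0) := tendsto_one_div_add_atTop_nhds_zero_nat
  have hpt : ∀ n, ∃ x, (c ≤ f x ∧ f x ≤ c + s n) ∧ ‖fderiv ℝ f x‖ ≤ 2 * s n := by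
    intro n
    obtain ⟨g₁, hg₁⟩ := exists_lt_of_ciInf_lt (show (⨅ g, F g) < c + s n by linarith [hs0 n])
    obtain ⟨g, hgle, hgE⟩ := exists_ekeland_point F hFlsc a hFa (s n) (hs0 n) g₁
    obtain ⟨x, hx, hdx⟩ := exists_almost_critical f hf hf' B b g.1
      (fun t ht => by rw [g.2 t ht]; exact hb t ht) (F g) (hle g) (by linarith [hFa g]) (s n)
      (hs0 n) (fun h hh => by
        obtain ⟨t, ht⟩ := hatt ⟨h, fun t ht => (hh t ht).trans (g.2 t ht)⟩
        have h1 := hgE ⟨h, fun t ht => (hh t ht).trans (g.2 t ht)⟩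
        exact ⟨t, h1.trans (by rw [Subtype.dist_eq]; linarith)⟩)
    refine ⟨x, ⟨?_, ?_⟩, hdx⟩
    · rw [hx]; exact ciInf_le hbddF g
    · linarith
  choose x hx hdx using hpt
  have hfx : Tendsto (fun n => f (x n)) atTop (𝓝 c) := by
    refine tendsto_of_tendsto_of_tendsto_of_le_of_le tendsto_const_nhds ?_
      (fun n => (hx n).1) (fun n => (hx n).2)
    simpa using hslim.const_add c
  have hdfx : Tendsto (fun n => ‖fderiv ℝ f (x n)‖) atTop (𝓝 0) :=
    squeeze_zero (fun _ => norm_nonneg _) hdx (by simpa using hslim.const_mul 2)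
  obtain ⟨φ, l, hφ, hl⟩ := hPS c x hfx hdfx
  refine hcrit ⟨l, ?_, ?_⟩
  · have h1 := (hf'.norm.tendsto l).comp hl
    exact norm_eq_zero.1 (tendsto_nhds_unique h1 (hdfx.comp hφ.tendsto_atTop))
  · have h1 := (hfc.tendsto l).comp hl
    rw [tendsto_nhds_unique h1 (hfx.comp hφ.tendsto_atTop)]
    exact hac

/-- If `f : H → ℝ` is `C^{1,1}` on a real Hilbert space and satisfies the Palais–Smale
condition at every level, and some sublevel `S = {f < a}` is nonempty with nontrivial
`k`-th homotopy group (non-path-connectedness for `k = 0`), then `f` has a critical point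
at a level `≥ a`. -/
theorem critical_point_from_nontrivial_homotopy_of_sublevel
    {H : Type*} [NormedAddCommGroup H] [InnerProductSpace ℝ H] [CompleteSpace H]
    (f : H → ℝ) (hf : Differentiable ℝ f) (hf' : LocallyLipschitz (fderiv ℝ f))
    (hPS : ∀ c : ℝ, ∀ x : ℕ → H,
      Tendsto (fun n => f (x n)) atTop (nhds c) →
      Tendsto (fun n => ‖fderiv ℝ f (x n)‖) atTop (nhds 0) →
      ∃ (φ : ℕ → ℕ) (l : H), StrictMono φ ∧ Tendsto (x ∘ φ) atTop (nhds l))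
    (k : ℕ) (a : ℝ)
    (hne : ({x : H | f x < a}).Nonempty)
    (htop : (k = 0 ∧ ¬ IsPathConnected {x : H | f x < a}) ∨
      (1 ≤ k ∧ ∃ x₀ : {x : H | f x < a},
        Nontrivial (HomotopyGroup (Fin k) {x : H | f x < a} x₀))) :
    ∃ x : H, fderiv ℝ f x = 0 ∧ a ≤ f x := by
  by_contra hcrit
  have hf'c : Continuous (fderiv ℝ f) := hf'.continuous
  rcases htop with ⟨-, hpc⟩ | ⟨-, x₀, hnt⟩
  · apply hpc
    obtain ⟨x, hx⟩ := hne
    refine ⟨x, hx, fun {y} hy => ?_⟩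
    obtain ⟨g, hgB, hg⟩ := exists_extension_into_sublevel (T := I) f hf hf'c hPS a hcrit {0, 1}
      (Set.toFinite _).isClosed ⟨fun t => AffineMap.lineMap x y (t : ℝ), by fun_prop⟩ (by
        rintro t (rfl | rfl)
        · simpa using hx
        · simpa using hy)
    exact ⟨⟨g, by simpa using hgB 0 (by simp), by simpa using hgB 1 (by simp)⟩, hg⟩
  · obtain ⟨α, β, hαβ⟩ := hnt
    induction α using Quotient.inductionOn with | _ p => ?_
    induction β using Quotient.inductionOn with | _ q => ?_
    refine hαβ (Quotient.sound ?_)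
    have hcl : IsClosed {z : I × (Fin k → I) | (z.1 = 0 ∨ z.1 = 1) ∨ ∃ i, z.2 i = 0 ∨ z.2 i = 1} := by
      have h1 : IsClosed (⋃ i : Fin k, {z : I × (Fin k → I) | z.2 i = 0 ∨ z.2 i = 1}) :=
        isClosed_iUnion_of_finite fun i =>
          (isClosed_eq (by fun_prop) continuous_const).union
            (isClosed_eq (by fun_prop) continuous_const)
      have h2 : IsClosed {z : I × (Fin k → I) | z.1 = 0 ∨ z.1 = 1} :=
        (isClosed_eq (by fun_prop) continuous_const).union
          (isClosed_eq (by fun_prop) continuous_const)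
      convert h2.union h1 using 1
      ext z
      simp
    have hpc : Continuous fun z : I × (Fin k → I) => ((p.1 z.2 : {x : H | f x < a}) : H) :=
      continuous_subtype_val.comp (p.1.continuous.comp continuous_snd)
    have hqc : Continuous fun z : I × (Fin k → I) => ((q.1 z.2 : {x : H | f x < a}) : H) :=
      continuous_subtype_val.comp (q.1.continuous.comp continuous_snd)
    obtain ⟨g, hgB, hg⟩ := exists_extension_into_sublevel (T := I × (Fin k → I)) f hf hf'c hPS a
      hcrit _ hcl
      ⟨fun z => AffineMap.lineMap ((p.1 z.2 : {x : H | f x < a}) : H)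
        ((q.1 z.2 : {x : H | f x < a}) : H) (z.1 : ℝ), by
          simp only [AffineMap.lineMap_apply_module']
          fun_prop⟩ (by
        rintro ⟨t, y⟩ ((h | h) | h)
        · obtain rfl : t = 0 := h
          simpa using show f (p y) < a from (p y).2
        · obtain rfl : t = 1 := h
          simpa using show f (q y) < a from (q y).2
        · have hp : p y = x₀ := p.2 y h
          have hq : q y = x₀ := q.2 y h
          simpa [hp, hq] using show f x₀ < a from x₀.2)
    refine ⟨⟨⟨⟨fun z => ⟨g z, hg z⟩, by fun_prop⟩, fun y => ?_, fun y => ?_⟩, fun t y hy => ?_⟩⟩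
    · exact Subtype.ext (by simpa using hgB (0, y) (Or.inl (Or.inl rfl)))
    · exact Subtype.ext (by simpa using hgB (1, y) (Or.inl (Or.inr rfl)))
    · have hp : p y = x₀ := p.2 y hy
      have hq : q y = x₀ := q.2 y hy
      refine Subtype.ext ?_
      simpa [hp, hq] using hgB (t, y) (Or.inr hy)
end

section
/- Let H be a real Hilbert space, let f : H → ℝ be continuously differentiable with gradient ∇f, and let c ∈ ℝ and ε > 0 be such that ‖df(x)‖ ≥ ε for every x ∈ H with |f(x) − c| ≤ ε. Let T ≥ 0 and let u : [0,T] → H be differentiable with u'(t) = −∇f(u(t)) for every t ∈ [0,T]. If |f(u(t)) − c| ≤ ε for all t ∈ [0,T], then T ≤ 2/ε. -/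
open Set

/-!
The energy `f ∘ u` has derivative `-‖∇f (u t)‖² ≤ -ε²` along the flow line, so by the mean value
inequality it drops by at least `ε² T` over `[0, T]`. Both endpoint values lie within `ε` of `c`,
so the drop is at most `2 ε`, whence `ε² T ≤ 2 ε`.
-/

/-- **Deformation time estimate in the mountain pass theorem.** If `‖df‖ ≥ ε` on the strip
`{|f - c| ≤ ε}` and `u` is a negative gradient flow line of `f` defined on `[0, T]` which
stays in this strip, then `T ≤ 2/ε`. -/
theorem gradient_flow_time_in_strip_le
    {H : Type*} [NormedAddCommGroup H] [InnerProductSpace ℝ H] [CompleteSpace H]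
    (f : H → ℝ) (hf : ContDiff ℝ 1 f)
    (c ε : ℝ) (hε : 0 < ε)
    (hgrad : ∀ x : H, |f x - c| ≤ ε → ε ≤ ‖fderiv ℝ f x‖)
    (T : ℝ) (hT : 0 ≤ T)
    (u : ℝ → H)
    (hu : ∀ t ∈ Icc 0 T, HasDerivAt u (-(gradient f (u t))) t)
    (hstrip : ∀ t ∈ Icc 0 T, |f (u t) - c| ≤ ε) :
    T ≤ 2 / ε := by
  have hderiv : ∀ t ∈ Icc 0 T,
      HasDerivAt (fun s => f (u s)) (-(‖fderiv ℝ f (u t)‖ ^ 2)) t := by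
    intro t ht
    have hd : DifferentiableAt ℝ f (u t) := hf.differentiable one_ne_zero (u t)
    have h := hd.hasFDerivAt.comp_hasDerivAt t (hu t ht)
    have hnorm : ‖gradient f (u t)‖ = ‖fderiv ℝ f (u t)‖ := by
      simp [gradient]
    have hval : fderiv ℝ f (u t) (-(gradient f (u t))) = -(‖fderiv ℝ f (u t)‖ ^ 2) := by
      rw [map_neg, ← hnorm, ← real_inner_self_eq_norm_sq]
      simp only [gradient, InnerProductSpace.toDual_symm_apply]
    rw [hval] at h
    exact h
  have hdrop : f (u T) - f (u 0) ≤ -(ε ^ 2) * (T - 0) := by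
    refine (convex_Icc 0 T).image_sub_le_mul_sub_of_deriv_le (f := fun s => f (u s))
      (fun t ht => (hderiv t ht).continuousAt.continuousWithinAt)
      (fun t ht => (hderiv t (interior_subset ht)).differentiableAt.differentiableWithinAt)
      (fun t ht => ?_) 0 (left_mem_Icc.2 hT) T (right_mem_Icc.2 hT) hT
    have ht' := interior_subset ht
    rw [(hderiv t ht').deriv]
    exact neg_le_neg (pow_le_pow_left₀ hε.le (hgrad _ (hstrip t ht')) 2)
  have h0 := (abs_le.1 (hstrip 0 (left_mem_Icc.2 hT))).2
  have h1 := (abs_le.1 (hstrip T (right_mem_Icc.2 hT))).1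
  have hmul : ε * (T * ε) ≤ ε * 2 := by linarith
  exact (le_div_iff₀ hε).2 (le_of_mul_le_mul_left hmul hε)
end

section
/- Let n ≥ 1, let U ⊆ ℝⁿ be an open convex set, and let θ : U → (ℝⁿ)* be a continuously differentiable one-form on U. Suppose C ≥ 0 is such that |Dθ(x)[u][v] − Dθ(x)[v][u]| ≤ C‖u‖‖v‖ for all x ∈ U and all u, v ∈ ℝⁿ (i.e. ‖dθ‖_∞ ≤ C). Then for every C¹ closed curve x : [0,1] → U with x(0) = x(1) one has |∫₀¹ θ(x(t))[x'(t)] dt| ≤ (C/4) · ℓ(x)², where ℓ(x) := ∫₀¹ ‖x'(t)‖ dt is the length of x. -/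
/-!
Contract the curve linearly onto its base point `p = x 0`: put `y t = x t - p` and
`H s t = p + s • y t`, which stays in `U` by convexity, and let
`φ s = ∫ θ (H s t) (s • x' t) dt`, so that `φ 0 = 0` and `φ 1` is the integral to be estimated.
Differentiating under the integral sign and subtracting
`∫ d/dt (θ (H s t) (y t)) dt`, which vanishes because the curve is closed, gives
`φ' s = s * ∫ dθ (H s t) (y t, x' t) dt`. Each point of a closed curve of length `ℓ` is joined
to the base point by an arc of length at most `ℓ / 2`, so `‖y t‖ ≤ ℓ / 2` and
`|φ' s| ≤ s * C * ℓ ^ 2 / 2`. Comparing `φ` with `s ^ 2 * C * ℓ ^ 2 / 4` on `[0, 1]` concludes.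
-/

open Set intervalIntegral

/-- On a closed curve, the two arcs joining `x t` to the base point have total length `ℓ`, and the
shorter one bounds the distance. -/
lemma norm_sub_base_le_half_length {E : Type*} [NormedAddCommGroup E] [NormedSpace ℝ E]
    [CompleteSpace E] {x x' : ℝ → E}
    (hx : ∀ t ∈ Icc (0 : ℝ) 1, HasDerivAt x (x' t) t)
    (hx' : ContinuousOn x' (Icc 0 1)) (hclosed : x 0 = x 1) {t : ℝ} (ht : t ∈ Icc (0 : ℝ) 1) :
    ‖x t - x 0‖ ≤ (∫ t in (0 : ℝ)..1, ‖x' t‖) / 2 := by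
  have s1 : uIcc 0 t ⊆ Icc (0 : ℝ) 1 := by
    rw [uIcc_of_le ht.1]; exact Icc_subset_Icc_right ht.2
  have s2 : uIcc t 1 ⊆ Icc (0 : ℝ) 1 := by
    rw [uIcc_of_le ht.2]; exact Icc_subset_Icc_left ht.1
  have e1 := integral_eq_sub_of_hasDerivAt (fun r hr => hx r (s1 hr))
    (hx'.mono s1).intervalIntegrable
  have e2 := integral_eq_sub_of_hasDerivAt (fun r hr => hx r (s2 hr))
    (hx'.mono s2).intervalIntegrable
  have n1 := norm_integral_le_integral_norm (f := x') (μ := MeasureTheory.volume) ht.1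
  have n2 := norm_integral_le_integral_norm (f := x') (μ := MeasureTheory.volume) ht.2
  have hadd := integral_add_adjacent_intervals (μ := MeasureTheory.volume)
    (hx'.norm.mono s1).intervalIntegrable (hx'.norm.mono s2).intervalIntegrable
  rw [e1] at n1
  rw [e2, ← hclosed, norm_sub_rev] at n2
  linarith

set_option maxHeartbeats 2000000 in
/-- **Isoperimetric-type estimate for the integral of a one-form.** If `θ` is a `C¹`
one-form on an open convex set `U ⊆ ℝⁿ` whose exterior differential is bounded by `C`, then
the integral of `θ` along any `C¹` closed curve contained in `U` is bounded by `(C/4) ℓ²`,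
where `ℓ` is the length of the curve. -/
theorem one_form_integral_le_length_sq
    (n : ℕ) (hn : 1 ≤ n)
    (U : Set (EuclideanSpace ℝ (Fin n))) (hUopen : IsOpen U) (hUconv : Convex ℝ U)
    (θ : EuclideanSpace ℝ (Fin n) → (EuclideanSpace ℝ (Fin n) →L[ℝ] ℝ))
    (hθ : ContDiffOn ℝ 1 θ U)
    (C : ℝ) (hC : 0 ≤ C)
    (hdθ : ∀ x ∈ U, ∀ u v : EuclideanSpace ℝ (Fin n),
      |fderiv ℝ θ x u v - fderiv ℝ θ x v u| ≤ C * ‖u‖ * ‖v‖)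
    (x : ℝ → EuclideanSpace ℝ (Fin n)) (x' : ℝ → EuclideanSpace ℝ (Fin n))
    (hx : ∀ t ∈ Icc (0:ℝ) 1, HasDerivAt x (x' t) t)
    (hx' : ContinuousOn x' (Icc 0 1))
    (hmem : ∀ t ∈ Icc (0:ℝ) 1, x t ∈ U)
    (hclosed : x 0 = x 1) :
    |∫ t in (0:ℝ)..1, θ (x t) (x' t)| ≤
      C / 4 * (∫ t in (0:ℝ)..1, ‖x' t‖) ^ 2 := by
  set L := ∫ t in (0:ℝ)..1, ‖x' t‖ with hL
  set I : Set ℝ := Icc 0 1 with hI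
  have hu : uIcc (0:ℝ) 1 = I := uIcc_of_le zero_le_one
  have hu' : uIoc (0:ℝ) 1 ⊆ I := by
    rw [uIoc_of_le zero_le_one]; exact Ioc_subset_Icc_self
  have h0 : (0:ℝ) ∈ I := by simp [hI]
  have hL0 : 0 ≤ L := integral_nonneg zero_le_one fun t _ => norm_nonneg _
  let y : ℝ → EuclideanSpace ℝ (Fin n) := fun t => x t - x 0
  let H : ℝ → ℝ → EuclideanSpace ℝ (Fin n) := fun s t => x 0 + s • y t
  have hy : ∀ t ∈ I, ‖y t‖ ≤ L / 2 := fun t ht => norm_sub_base_le_half_length hx hx' hclosed ht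
  have hH : ∀ s ∈ I, ∀ t ∈ I, H s t ∈ U := fun s hs t ht =>
    hUconv.add_smul_sub_mem (hmem 0 h0) (hmem t ht) hs
  have hθd : ∀ z ∈ U, HasFDerivAt θ (fderiv ℝ θ z) z := fun z hz =>
    ((hθ.differentiableOn one_ne_zero).differentiableAt (hUopen.mem_nhds hz)).hasFDerivAt
  -- `G` is the integrand of `φ`, `A` its `s`-derivative, `B` the `t`-derivative of
  -- `θ (H s t) (y t)`.
  let G : ℝ → ℝ → ℝ := fun s t => θ (H s t) (s • x' t)
  let A : ℝ → ℝ → ℝ := fun s t => fderiv ℝ θ (H s t) (y t) (s • x' t) + θ (H s t) (x' t)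
  let B : ℝ → ℝ → ℝ := fun s t => fderiv ℝ θ (H s t) (s • x' t) (y t) + θ (H s t) (x' t)
  have cx : ContinuousOn x I := fun t ht => (hx t ht).continuousAt.continuousWithinAt
  have cfst : ContinuousOn (fun p : ℝ × ℝ => p.1) (I ×ˢ I) := continuousOn_fst
  have cx2 : ContinuousOn (fun p : ℝ × ℝ => x' p.2) (I ×ˢ I) :=
    hx'.comp continuousOn_snd fun p hp => hp.2
  have cy : ContinuousOn y I := cx.sub continuousOn_const
  have cy2 : ContinuousOn (fun p : ℝ × ℝ => y p.2) (I ×ˢ I) :=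
    cy.comp continuousOn_snd fun p hp => hp.2
  have cH : ContinuousOn (fun p : ℝ × ℝ => H p.1 p.2) (I ×ˢ I) :=
    continuousOn_const.add (cfst.smul cy2)
  have cθ : ContinuousOn (fun p : ℝ × ℝ => θ (H p.1 p.2)) (I ×ˢ I) :=
    hθ.continuousOn.comp cH fun p hp => hH _ hp.1 _ hp.2
  have cθ' : ContinuousOn (fun p : ℝ × ℝ => fderiv ℝ θ (H p.1 p.2)) (I ×ˢ I) :=
    (hθ.continuousOn_fderiv_of_isOpen hUopen le_rfl).comp cH fun p hp => hH _ hp.1 _ hp.2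
  have cG : ContinuousOn (fun p : ℝ × ℝ => G p.1 p.2) (I ×ˢ I) := cθ.clm_apply (cfst.smul cx2)
  have cA : ContinuousOn (fun p : ℝ × ℝ => A p.1 p.2) (I ×ˢ I) :=
    ((cθ'.clm_apply cy2).clm_apply (cfst.smul cx2)).add (cθ.clm_apply cx2)
  have cB : ContinuousOn (fun p : ℝ × ℝ => B p.1 p.2) (I ×ˢ I) :=
    ((cθ'.clm_apply (cfst.smul cx2)).clm_apply cy2).add (cθ.clm_apply cx2)
  have slice : ∀ F : ℝ → ℝ → ℝ, ContinuousOn (fun p : ℝ × ℝ => F p.1 p.2) (I ×ˢ I) →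
      ∀ s ∈ I, ContinuousOn (F s) I := fun F hF s hs =>
    hF.comp (continuousOn_const.prodMk continuousOn_id) fun t ht => ⟨hs, ht⟩
  have sliceInt : ∀ F : ℝ → ℝ → ℝ, ContinuousOn (fun p : ℝ × ℝ => F p.1 p.2) (I ×ˢ I) →
      ∀ s ∈ I, IntervalIntegrable (F s) MeasureTheory.volume 0 1 := fun F hF s hs =>
    ContinuousOn.intervalIntegrable (by rw [hu]; exact slice F hF s hs)
  have hmeas : ∀ F : ℝ → ℝ → ℝ, ContinuousOn (fun p : ℝ × ℝ => F p.1 p.2) (I ×ˢ I) →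
      ∀ s ∈ I, MeasureTheory.AEStronglyMeasurable (F s)
        (MeasureTheory.volume.restrict (uIoc (0:ℝ) 1)) := fun F hF s hs =>
    ((slice F hF s hs).mono hu').aestronglyMeasurable measurableSet_uIoc
  have hcomp : IsCompact (I ×ˢ I) := isCompact_Icc.prod isCompact_Icc
  obtain ⟨MG, hMG⟩ := hcomp.exists_bound_of_continuousOn cG
  obtain ⟨MA, hMA⟩ := hcomp.exists_bound_of_continuousOn cA
  let φ : ℝ → ℝ := fun s => ∫ t in (0:ℝ)..1, G s t
  have cφ : ContinuousOn φ I := by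
    intro s hs
    refine continuousWithinAt_of_dominated_interval (bound := fun _ => MG) ?_ ?_ (by simp) ?_
    · filter_upwards [self_mem_nhdsWithin] with r hr using hmeas G cG r hr
    · filter_upwards [self_mem_nhdsWithin] with r hr
      exact .of_forall fun t ht => hMG (r, t) ⟨hr, hu' ht⟩
    · refine .of_forall fun t ht => ?_
      exact (cG.comp (continuousOn_id.prodMk continuousOn_const)
        fun r hr => ⟨hr, hu' ht⟩ : ContinuousOn (fun r => G r t) I) s hs
  have dφ : ∀ s ∈ Ioo (0:ℝ) 1, HasDerivAt φ (∫ t in (0:ℝ)..1, A s t) s := by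
    intro s hs
    have hsI := Ioo_subset_Icc_self hs
    have hn : Ioo (0:ℝ) 1 ∈ nhds s := isOpen_Ioo.mem_nhds hs
    refine (hasDerivAt_integral_of_dominated_loc_of_deriv_le (bound := fun _ => MA) (F := G)
      (F' := A) hn ?_ (sliceInt G cG s hsI) (hmeas A cA s hsI) ?_ (by simp) ?_).2
    · filter_upwards [hn] with r hr using hmeas G cG r (Ioo_subset_Icc_self hr)
    · exact .of_forall fun t ht r hr => hMA (r, t) ⟨Ioo_subset_Icc_self hr, hu' ht⟩
    · refine .of_forall fun t ht r hr => ?_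
      have hHd : HasDerivAt (fun r => H r t) (y t) r := by
        simpa [H] using (hasDerivAt_id r).smul_const (y t)
      have h1 := (hθd _ (hH r (Ioo_subset_Icc_self hr) t (hu' ht))).comp_hasDerivAt r hHd
      have h2 : HasDerivAt (fun r : ℝ => r • x' t) (x' t) r := by
        simpa using (hasDerivAt_id r).smul_const (x' t)
      exact h1.clm_apply h2
  have hB0 : ∀ s ∈ I, ∫ t in (0:ℝ)..1, B s t = 0 := by
    intro s hs
    have hd : ∀ t ∈ uIcc (0:ℝ) 1, HasDerivAt (fun t => θ (H s t) (y t)) (B s t) t := by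
      intro t ht
      rw [hu] at ht
      have hyd : HasDerivAt y (x' t) t := (hx t ht).sub_const _
      have hHd : HasDerivAt (fun t => H s t) (s • x' t) t := by
        have h := hyd.const_smul s
        exact h.const_add (x 0)
      have h1 := (hθd _ (hH s hs t ht)).comp_hasDerivAt t hHd
      exact h1.clm_apply hyd
    rw [integral_eq_sub_of_hasDerivAt hd (sliceInt B cB s hs)]
    simp [y, hclosed]
  have hbound : ∀ s ∈ I, |∫ t in (0:ℝ)..1, A s t| ≤ s * (C * L ^ 2 / 2) := by
    intro s hs
    have heq : ∫ t in (0:ℝ)..1, A s t = ∫ t in (0:ℝ)..1, (A s t - B s t) := by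
      rw [integral_sub (sliceInt A cA s hs) (sliceInt B cB s hs), hB0 s hs, sub_zero]
    rw [heq, ← Real.norm_eq_abs]
    have hint : IntervalIntegrable (fun t => s * C * (L / 2) * ‖x' t‖)
        MeasureTheory.volume 0 1 :=
      ContinuousOn.intervalIntegrable (by rw [hu]; exact continuousOn_const.mul hx'.norm)
    refine (norm_integral_le_of_norm_le zero_le_one (.of_forall fun t ht => ?_) hint).trans ?_
    · have ht' : t ∈ I := Ioc_subset_Icc_self ht
      have h1 := hdθ _ (hH s hs t ht') (y t) (x' t)
      have h2 : A s t - B s t =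
          s * (fderiv ℝ θ (H s t) (y t) (x' t) - fderiv ℝ θ (H s t) (x' t) (y t)) := by
        simp only [A, B, map_smul, smul_eq_mul, smul_apply]
        ring
      have hs0 : 0 ≤ s := hs.1
      rw [h2, Real.norm_eq_abs, abs_mul, abs_of_nonneg hs0]
      calc s * _ ≤ s * (C * ‖y t‖ * ‖x' t‖) := by gcongr
        _ ≤ s * (C * (L / 2) * ‖x' t‖) := by gcongr; exact hy t ht'
        _ = _ := by ring
    · rw [integral_const_mul, ← hL]
      exact le_of_eq (by ring)
  have hφ0 : φ 0 = 0 := by simp [φ, G]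
  have hφ1 : φ 1 = ∫ t in (0:ℝ)..1, θ (x t) (x' t) := by simp [φ, G, H, y]
  -- Both `C ℓ² / 4 * s² + φ` and `C ℓ² / 4 * s² - φ` are nondecreasing on `[0, 1]`.
  have key : ∀ ε : ℝ, |ε| = 1 → 0 ≤ C / 4 * L ^ 2 + ε * φ 1 := by
    intro ε hε
    have hd : ∀ s ∈ Ioo (0:ℝ) 1, HasDerivAt (fun s => C / 4 * L ^ 2 * s ^ 2 + ε * φ s)
        (s * (C * L ^ 2 / 2) + ε * ∫ t in (0:ℝ)..1, A s t) s := by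
      intro s hs
      have h := ((hasDerivAt_pow 2 s).const_mul (C / 4 * L ^ 2)).add ((dφ s hs).const_mul ε)
      exact h.congr_deriv (by push_cast; ring)
    have hmono : MonotoneOn (fun s => C / 4 * L ^ 2 * s ^ 2 + ε * φ s) (Icc 0 1) := by
      refine monotoneOn_of_deriv_nonneg (convex_Icc 0 1) ?_ ?_ ?_
      · exact (by fun_prop : Continuous fun s : ℝ => C / 4 * L ^ 2 * s ^ 2).continuousOn.add
          (continuousOn_const.mul cφ)
      · rw [interior_Icc]
        exact fun s hs => (hd s hs).differentiableAt.differentiableWithinAt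
      · rw [interior_Icc]
        intro s hs
        rw [(hd s hs).deriv]
        have h1 := hbound s (Ioo_subset_Icc_self hs)
        have h2 := neg_abs_le (ε * ∫ t in (0:ℝ)..1, A s t)
        rw [abs_mul, hε, one_mul] at h2
        linarith
    have h := hmono (left_mem_Icc.2 zero_le_one) (right_mem_Icc.2 zero_le_one) zero_le_one
    simpa [hφ0] using h
  rw [← hφ1, abs_le]
  have hp := key 1 (by simp)
  have hm := key (-1) (by simp)
  constructor <;> linarith
end

section
/- Let n ≥ 1, let L : ℝⁿ × ℝⁿ → ℝ be continuous with L(x,v) ≥ L₀‖v‖² − L₁ for all (x,v), where L₀ > 0 and L₁ ∈ ℝ, and let κ ∈ ℝ. Let γ_h : [0,T_h] → ℝⁿ be a sequence of C¹ curves with T_h > 0 and T_h → 0. Then: (i) if there is a > 0 such that ℓ(γ_h) ≥ a for all h, then ∫₀^{T_h} (L(γ_h(t),γ_h'(t)) + κ) dt → +∞; (ii) in general, liminf_{h→∞} ∫₀^{T_h} (L(γ_h(t),γ_h'(t)) + κ) dt ≥ 0. -/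
open Set Filter intervalIntegral

/-!
For every real `c`, the inequality `‖v‖² ≥ 2c‖v‖ - c²` turns the quadratic lower bound on `L` into
one that is affine in `‖v‖`, and integration gives
`∫ (L(γ,γ') + κ) ≥ 2 L₀ c ℓ(γ) - (L₀ c² + L₁ - κ) T` (`action_lower_bound`).
As `T → 0` the last term vanishes for each fixed `c`. When `ℓ(γ_h) ≥ a > 0`, taking `c` large makes
the lower limit of the actions exceed any prescribed number; taking `c = 0` shows that the lower
limit is always nonnegative. The free parameter `c` replaces the optimal choice `c = ℓ/T`, which
would give the Cauchy–Schwarz bound `L₀ ℓ²/T`.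
-/

/-- The action dominates an affine function of the length, for every real parameter `c`. -/
lemma action_lower_bound {E : Type*} [NormedAddCommGroup E] [NormedSpace ℝ E]
    {L : E × E → ℝ} (hLcont : Continuous L) {L₀ L₁ : ℝ} (hL₀ : 0 < L₀)
    (hlow : ∀ x v : E, L₀ * ‖v‖ ^ 2 - L₁ ≤ L (x, v)) (κ : ℝ)
    {T : ℝ} (hT : 0 < T) {γ γ' : ℝ → E}
    (hγ : ContinuousOn γ (Icc 0 T)) (hγ' : ContinuousOn γ' (Icc 0 T)) (c : ℝ) :
    2 * L₀ * c * (∫ t in (0:ℝ)..T, ‖γ' t‖) - (L₀ * c ^ 2 + L₁ - κ) * T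
      ≤ ∫ t in (0:ℝ)..T, (L (γ t, γ' t) + κ) := by
  have hlen : IntervalIntegrable (fun t => 2 * L₀ * c * ‖γ' t‖) MeasureTheory.volume 0 T :=
    (continuousOn_const.mul hγ'.norm).intervalIntegrable_of_Icc hT.le
  have hact : IntervalIntegrable (fun t => L (γ t, γ' t) + κ) MeasureTheory.volume 0 T :=
    ((hLcont.comp_continuousOn (hγ.prodMk hγ')).add
      continuousOn_const).intervalIntegrable_of_Icc hT.le
  have hval : ∫ t in (0:ℝ)..T, (2 * L₀ * c * ‖γ' t‖ - (L₀ * c ^ 2 + L₁ - κ))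
      = 2 * L₀ * c * (∫ t in (0:ℝ)..T, ‖γ' t‖) - (L₀ * c ^ 2 + L₁ - κ) * T := by
    rw [integral_sub hlen intervalIntegrable_const, integral_const_mul, integral_const,
      smul_eq_mul]
    ring
  rw [← hval]
  refine integral_mono_on hT.le (hlen.sub intervalIntegrable_const) hact fun t _ => ?_
  nlinarith [hlow (γ t) (γ' t), mul_nonneg hL₀.le (sq_nonneg (‖γ' t‖ - c))]

/-- **Behavior of the free period action as the period tends to zero.** Let
`L(x,v) ≥ L₀‖v‖² - L₁` and let `γ_h : [0,T_h] → ℝⁿ` be `C¹` curves with `T_h → 0`. Then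
(i) if the lengths `ℓ(γ_h)` are bounded away from zero, the actions tend to `+∞`;
(ii) in general, the liminf of the actions is nonnegative. -/
theorem action_behavior_as_period_to_zero
    (n : ℕ) (hn : 1 ≤ n)
    (L : EuclideanSpace ℝ (Fin n) × EuclideanSpace ℝ (Fin n) → ℝ)
    (hLcont : Continuous L)
    (L₀ L₁ : ℝ) (hL₀ : 0 < L₀)
    (hlow : ∀ x v : EuclideanSpace ℝ (Fin n), L₀ * ‖v‖ ^ 2 - L₁ ≤ L (x, v))
    (κ : ℝ)
    (T : ℕ → ℝ) (hT : ∀ h, 0 < T h) (hT0 : Tendsto T atTop (nhds 0))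
    (γ : ℕ → ℝ → EuclideanSpace ℝ (Fin n)) (γ' : ℕ → ℝ → EuclideanSpace ℝ (Fin n))
    (hγ : ∀ h, ∀ t ∈ Icc 0 (T h), HasDerivAt (γ h) (γ' h t) t)
    (hγ' : ∀ h, ContinuousOn (γ' h) (Icc 0 (T h))) :
    ((∃ a > (0:ℝ), ∀ h, a ≤ ∫ t in (0:ℝ)..(T h), ‖γ' h t‖) →
      Tendsto (fun h => ∫ t in (0:ℝ)..(T h), (L (γ h t, γ' h t) + κ)) atTop atTop) ∧
    (0 : EReal) ≤ liminf
      (fun h => ((∫ t in (0:ℝ)..(T h), (L (γ h t, γ' h t) + κ) : ℝ) : EReal)) atTop := by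
  have hbound : ∀ c h, 2 * L₀ * c * (∫ t in (0:ℝ)..(T h), ‖γ' h t‖)
      - (L₀ * c ^ 2 + L₁ - κ) * T h ≤ ∫ t in (0:ℝ)..(T h), (L (γ h t, γ' h t) + κ) :=
    fun c h => action_lower_bound hLcont hL₀ hlow κ (hT h)
      (fun t ht => (hγ h t ht).continuousAt.continuousWithinAt) (hγ' h) c
  constructor
  · rintro ⟨a, ha, hlen⟩
    refine tendsto_atTop.2 fun M => ?_
    -- With this `c`, the length term is at least `|M| + 1`, leaving room for the error term.
    set c : ℝ := (|M| + 1) / (2 * L₀ * a) with hc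
    have hc0 : 0 ≤ c := by positivity
    have hca : 2 * L₀ * c * a = |M| + 1 := by rw [hc]; field_simp
    have herr : Tendsto (fun h => (L₀ * c ^ 2 + L₁ - κ) * T h) atTop (nhds 0) := by
      simpa using hT0.const_mul (L₀ * c ^ 2 + L₁ - κ)
    filter_upwards [herr.eventually_lt_const one_pos] with h hh
    have hmul : 2 * L₀ * c * a ≤ 2 * L₀ * c * ∫ t in (0:ℝ)..(T h), ‖γ' h t‖ :=
      mul_le_mul_of_nonneg_left (hlen h) (by positivity)
    linarith [hbound c h, le_abs_self M]
  · have herr : Tendsto (fun h => ((-((L₁ - κ) * T h) : ℝ) : EReal)) atTop (nhds 0) := by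
      have hreal : Tendsto (fun h => -((L₁ - κ) * T h)) atTop (nhds 0) := by
        simpa using (hT0.const_mul (L₁ - κ)).neg
      exact_mod_cast (continuous_coe_real_ereal.tendsto 0).comp hreal
    rw [← herr.liminf_eq]
    refine liminf_le_liminf (Eventually.of_forall fun h => EReal.coe_le_coe_iff.2 ?_)
    have h0 := hbound 0 h
    norm_num at h0 ⊢
    linarith
end

section
/- Let n ≥ 1, let U ⊆ ℝⁿ be open, let θ : U → (ℝⁿ)* be a continuous one-form on U, and let Θ > 0 be such that |∫₀ᵀ θ(γ(t))[γ'(t)] dt| ≤ Θ · ℓ(γ)² for every T > 0 and every C¹ closed curve γ : [0,T] → U with γ(0) = γ(T). Let L : U × ℝⁿ → ℝ be continuous, let e₀ ∈ ℝ and L₀ > 0 be such that L(x,v) ≥ −e₀ + θ(x)[v] + L₀‖v‖² for all (x,v) ∈ U × ℝⁿ, and let κ > e₀. Then every C¹ closed curve γ : [0,T] → U with γ(0) = γ(T) and ∫₀ᵀ (L(γ(t),γ'(t)) + κ) dt < 0 satisfies T > L₀/Θ and ℓ(γ)² > (κ − e₀)L₀/Θ². -/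
/-!
Integrating the lower bound on `L` along the curve and applying the isoperimetric bound to the
`θ`-term gives, with `ℓ` the length of `γ`,
`0 > ∫ (L + κ) ≥ (κ - e₀) T - Θ ℓ² + L₀ ∫ ‖γ'‖² ≥ (κ - e₀) T + (L₀ / T - Θ) ℓ²`,
the last step being Cauchy-Schwarz, `ℓ² ≤ T ∫ ‖γ'‖²`. Hence `Θ > L₀ / T`, and then
`Θ ℓ² > (κ - e₀) T > (κ - e₀) L₀ / Θ`.
-/


open Set intervalIntegral

/-- **Length and period bounds for closed curves of negative action.** Let `θ` be a
continuous one-form on an open set `U ⊆ ℝⁿ` satisfying the isoperimetric bound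
`|∫ θ(γ)[γ']| ≤ Θ ℓ(γ)²` on closed `C¹` curves in `U`, and let `L` satisfy
`L(x,v) ≥ -e₀ + θ(x)[v] + L₀‖v‖²` on `U × ℝⁿ`. If `κ > e₀`, then every closed `C¹` curve
`γ : [0,T] → U` with negative action `∫₀ᵀ (L(γ,γ') + κ) dt < 0` has period `T > L₀/Θ` and
length satisfying `ℓ(γ)² > (κ - e₀) L₀ / Θ²`. -/
theorem negative_action_curve_period_and_length_bounds
    (n : ℕ) (hn : 1 ≤ n)
    (U : Set (EuclideanSpace ℝ (Fin n))) (hUopen : IsOpen U)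
    (θ : EuclideanSpace ℝ (Fin n) → (EuclideanSpace ℝ (Fin n) →L[ℝ] ℝ))
    (hθ : ContinuousOn θ U)
    (Θ : ℝ) (hΘ : 0 < Θ)
    (hiso : ∀ (T : ℝ), 0 < T →
      ∀ (γ γ' : ℝ → EuclideanSpace ℝ (Fin n)),
        (∀ t ∈ Icc 0 T, HasDerivAt γ (γ' t) t) →
        ContinuousOn γ' (Icc 0 T) →
        (∀ t ∈ Icc 0 T, γ t ∈ U) →
        γ 0 = γ T →
        |∫ t in (0:ℝ)..T, θ (γ t) (γ' t)| ≤ Θ * (∫ t in (0:ℝ)..T, ‖γ' t‖) ^ 2)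
    (L : EuclideanSpace ℝ (Fin n) → EuclideanSpace ℝ (Fin n) → ℝ)
    (hLcont : ContinuousOn (fun p : EuclideanSpace ℝ (Fin n) × EuclideanSpace ℝ (Fin n) =>
      L p.1 p.2) (U ×ˢ univ))
    (e₀ L₀ : ℝ) (hL₀ : 0 < L₀)
    (hlow : ∀ x ∈ U, ∀ v : EuclideanSpace ℝ (Fin n),
      -e₀ + θ x v + L₀ * ‖v‖ ^ 2 ≤ L x v)
    (κ : ℝ) (hκ : e₀ < κ)
    (T : ℝ) (hT : 0 < T)
    (γ γ' : ℝ → EuclideanSpace ℝ (Fin n))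
    (hγ : ∀ t ∈ Icc 0 T, HasDerivAt γ (γ' t) t)
    (hγ' : ContinuousOn γ' (Icc 0 T))
    (hmem : ∀ t ∈ Icc 0 T, γ t ∈ U)
    (hclosed : γ 0 = γ T)
    (hneg : (∫ t in (0:ℝ)..T, (L (γ t) (γ' t) + κ)) < 0) :
    L₀ / Θ < T ∧ (κ - e₀) * L₀ / Θ ^ 2 < (∫ t in (0:ℝ)..T, ‖γ' t‖) ^ 2 := by
  have huIcc : uIcc 0 T = Icc 0 T := uIcc_of_le hT.le
  have hγc : ContinuousOn γ (Icc 0 T) := fun t ht => (hγ t ht).continuousAt.continuousWithinAt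
  have hLi : IntervalIntegrable (fun t => L (γ t) (γ' t) + κ) MeasureTheory.volume 0 T := by
    apply ContinuousOn.intervalIntegrable
    rw [huIcc]
    exact (hLcont.comp (hγc.prodMk hγ') fun t ht => ⟨hmem t ht, mem_univ _⟩).add
      continuousOn_const
  have hθi : IntervalIntegrable (fun t => θ (γ t) (γ' t)) MeasureTheory.volume 0 T := by
    apply ContinuousOn.intervalIntegrable
    rw [huIcc]
    exact (hθ.comp hγc hmem).clm_apply hγ'
  have hvi : IntervalIntegrable (fun t => ‖γ' t‖) MeasureTheory.volume 0 T := by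
    apply ContinuousOn.intervalIntegrable
    rw [huIcc]
    exact hγ'.norm
  have hiso' := (abs_le.mp (hiso T hT γ γ' hγ hγ' hmem hclosed)).1
  set ℓ := ∫ t in (0:ℝ)..T, ‖γ' t‖ with hℓ
  set I := ∫ t in (0:ℝ)..T, θ (γ t) (γ' t) with hI
  -- Cauchy-Schwarz is obtained by integrating `‖γ'‖² ≥ 2 m ‖γ'‖ - m²` with `m = ℓ / T`,
  -- the mean speed.
  obtain ⟨m, hm⟩ : ∃ m, m = ℓ / T := ⟨_, rfl⟩
  have hmono : (∫ t in (0:ℝ)..T, ((κ - e₀ - L₀ * m ^ 2) + θ (γ t) (γ' t)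
      + (2 * L₀ * m) * ‖γ' t‖)) ≤ ∫ t in (0:ℝ)..T, (L (γ t) (γ' t) + κ) := by
    refine integral_mono_on hT.le
      ((intervalIntegrable_const.add hθi).add (hvi.const_mul _)) hLi fun t ht => ?_
    have h1 := hlow (γ t) (hmem t ht) (γ' t)
    have h2 := mul_nonneg hL₀.le (sq_nonneg (‖γ' t‖ - m))
    nlinarith
  rw [integral_add (intervalIntegrable_const.add hθi) (hvi.const_mul _),
    integral_add intervalIntegrable_const hθi, intervalIntegral.integral_const,
    intervalIntegral.integral_const_mul, ← hℓ, ← hI, sub_zero, smul_eq_mul] at hmono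
  have hmT : ℓ = m * T := by rw [hm]; field_simp
  have hκ' : 0 < κ - e₀ := sub_pos.mpr hκ
  -- The estimate `(κ - e₀) T + (L₀ / T - Θ) ℓ² < 0`, divided by `T` and written in terms of `m`.
  have key : (κ - e₀) + L₀ * m ^ 2 < Θ * T * m ^ 2 := by
    rw [hmT] at hmono hiso'
    refine lt_of_mul_lt_mul_left ?_ hT.le
    nlinarith
  have hTlow : L₀ < Θ * T := by
    by_contra! h
    nlinarith [mul_le_mul_of_nonneg_right h (sq_nonneg m)]
  refine ⟨(div_lt_iff₀' hΘ).mpr hTlow, (div_lt_iff₀ (by positivity)).mpr ?_⟩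
  calc (κ - e₀) * L₀ < (κ - e₀) * (Θ * T) := mul_lt_mul_of_pos_left hTlow hκ'
    _ ≤ (Θ * T * m ^ 2) * (Θ * T) := by
      refine mul_le_mul_of_nonneg_right ?_ (by positivity)
      nlinarith [mul_nonneg hL₀.le (sq_nonneg m)]
    _ = ℓ ^ 2 * Θ ^ 2 := by rw [hmT]; ring
end

section
/- Let n ≥ 1 and let f : ℝⁿ → ℝ be twice continuously differentiable with D²f(v)[u,u] ≥ 2L₀‖u‖² for all v, u ∈ ℝⁿ, where L₀ > 0. Define the energy E : ℝⁿ → ℝ by E(v) := Df(v)[v] − f(v). Then E(v) ≥ E(0) + L₀‖v‖² for every v ∈ ℝⁿ; in particular E attains its minimum over ℝⁿ at v = 0. -/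
/-! Along the ray `t ↦ t • v` the energy is `E(t v) = t * Df(t v)[v] - f(t v)`. On differentiating,
the two first-order terms cancel and `d/dt E(t v) = t * D²f(t v)[v, v] ≥ 2 L₀ t ‖v‖²` for `t ≥ 0`,
so `E(t v) - L₀ ‖v‖² t²` is nondecreasing on `[0, ∞)`; comparing `t = 0` with `t = 1` gives the
claim. -/

/-- **The fiberwise energy of a uniformly convex Lagrangian is minimal at `v = 0`.** If
`f : ℝⁿ → ℝ` is `C²` with `D²f ≥ 2L₀ > 0`, then the energy `E(v) = Df(v)[v] - f(v)`
satisfies `E(v) ≥ E(0) + L₀‖v‖²`; in particular `E` attains its minimum at `v = 0`. -/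
theorem energy_min_at_zero_of_uniformly_convex
    (n : ℕ) (hn : 1 ≤ n)
    (f : EuclideanSpace ℝ (Fin n) → ℝ) (hf : ContDiff ℝ 2 f)
    (L₀ : ℝ) (hL₀ : 0 < L₀)
    (hconv : ∀ v u : EuclideanSpace ℝ (Fin n),
      2 * L₀ * ‖u‖ ^ 2 ≤ fderiv ℝ (fderiv ℝ f) v u u) :
    (∀ v : EuclideanSpace ℝ (Fin n),
      (fderiv ℝ f 0 0 - f 0) + L₀ * ‖v‖ ^ 2 ≤ fderiv ℝ f v v - f v) ∧
    (∀ v : EuclideanSpace ℝ (Fin n),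
      fderiv ℝ f 0 0 - f 0 ≤ fderiv ℝ f v v - f v) := by
  have key : ∀ v : EuclideanSpace ℝ (Fin n),
      (fderiv ℝ f 0 0 - f 0) + L₀ * ‖v‖ ^ 2 ≤ fderiv ℝ f v v - f v := by
    intro v
    have hd : Differentiable ℝ f := hf.differentiable (by norm_num)
    have hd2 : Differentiable ℝ (fderiv ℝ f) :=
      (hf.fderiv_right (m := 1) (by norm_num)).differentiable (by norm_num)
    have hray : ∀ t : ℝ, HasDerivAt (fun s : ℝ => s • v) v t := fun t => by
      simpa using (hasDerivAt_id t).smul_const v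
    have h1 : ∀ t : ℝ, HasDerivAt (fun s : ℝ => f (s • v)) (fderiv ℝ f (t • v) v) t :=
      fun t => (hd (t • v)).hasFDerivAt.comp_hasDerivAt t (hray t)
    have h2 : ∀ t : ℝ, HasDerivAt (fun s : ℝ => fderiv ℝ f (s • v) v)
        (fderiv ℝ (fderiv ℝ f) (t • v) v v) t := fun t => by
      have h := (hd2 (t • v)).hasFDerivAt.comp_hasDerivAt t (hray t)
      simpa using h.clm_apply (hasDerivAt_const t v)
    have h3 : ∀ t : ℝ, HasDerivAt
        (fun s : ℝ => s * fderiv ℝ f (s • v) v - f (s • v) - L₀ * ‖v‖ ^ 2 * s ^ 2)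
        (t * (fderiv ℝ (fderiv ℝ f) (t • v) v v - 2 * L₀ * ‖v‖ ^ 2)) t := fun t => by
      refine ((((hasDerivAt_id' t).mul (h2 t)).sub (h1 t)).sub
        (((hasDerivAt_id' t).pow 2).const_mul (L₀ * ‖v‖ ^ 2))).congr_deriv ?_
      norm_num
      ring
    have hmono : MonotoneOn
        (fun s : ℝ => s * fderiv ℝ f (s • v) v - f (s • v) - L₀ * ‖v‖ ^ 2 * s ^ 2)
        (Set.Ici 0) := by
      refine monotoneOn_of_deriv_nonneg (convex_Ici 0)
        (fun t _ => (h3 t).continuousAt.continuousWithinAt)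
        (fun t _ => (h3 t).differentiableAt.differentiableWithinAt) fun t ht => ?_
      rw [interior_Ici] at ht
      rw [(h3 t).deriv]
      exact mul_nonneg (le_of_lt ht) (sub_nonneg.mpr (hconv (t • v) v))
    have h := hmono (Set.mem_Ici.mpr le_rfl) (Set.mem_Ici.mpr zero_le_one) zero_le_one
    simp at h
    simp
    linarith
  exact ⟨key, fun v => le_trans (le_add_of_nonneg_right (by positivity)) (key v)⟩
end
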